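/- arXiv:1906.00079 — 8 statements merged into one kernel-verified Lean document; each statement's English description precedes it below -/
import Mathlib

section
/- Let θ be a real number and M = [[m,n],[p,q]] ∈ GL₂(ℤ) with pθ+q ≠ 0, and set M(θ) := (mθ+n)/(pθ+q). Then the map φ : 𝕋²×ℝ → 𝕋²×ℝ given by φ([x⃗],t) := ([M x⃗], t(pθ+q)) is a bijection, and it intertwines the Kronecker flows: for every x⃗ ∈ ℝ² and t ∈ ℝ one has M·β^θ_t([x⃗]) = β^{M(θ)}_{t(pθ+q)}(M·[x⃗]) in 𝕋². Consequently φ is an isomorphism of the transformation groupoids 𝕋²⋊_θℝ → 𝕋²⋊_{M(θ)}ℝ. -/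
/-!
STATEMENT 0: For θ ∈ ℝ and M = [[m,n],[p,q]] ∈ GL₂(ℤ) with pθ+q ≠ 0, the map
φ([x⃗],t) := ([M x⃗], t(pθ+q)) on 𝕋²×ℝ is a bijection intertwining the Kronecker
flows of angle θ and M(θ) = (mθ+n)/(pθ+q); consequently it is an isomorphism of
the transformation groupoids 𝕋²⋊_θℝ → 𝕋²⋊_{M(θ)}ℝ.
-/

noncomputable section

/-- The circle ℝ/ℤ. -/
abbrev Torus : Type := AddCircle (1 : ℝ)

/-- The 2-torus ℝ²/ℤ², realized as a product of two circles. -/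
abbrev Torus2 : Type := Torus × Torus

/-- The quotient map ℝ² → 𝕋². -/
def torusMk (v : ℝ × ℝ) : Torus2 := ((v.1 : Torus), (v.2 : Torus))

/-- The action of an integer 2×2 matrix [[m,n],[p,q]] on 𝕋². -/
def matAct (m n p q : ℤ) (z : Torus2) : Torus2 :=
  (m • z.1 + n • z.2, p • z.1 + q • z.2)

/-- The Kronecker flow of angle θ on 𝕋²: β_t([x,y]) = [x+tθ, y+t]. -/
def kroneckerFlow (θ t : ℝ) (z : Torus2) : Torus2 :=
  (z.1 + ((t * θ : ℝ) : Torus), z.2 + ((t : ℝ) : Torus))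

theorem matAct_add (m n p q : ℤ) (z w : Torus2) :
    matAct m n p q (z + w) = matAct m n p q z + matAct m n p q w := by
  ext1 <;> simp only [matAct, Prod.fst_add, Prod.snd_add, smul_add] <;> abel

theorem matAct_torusMk (m n p q : ℤ) (v : ℝ × ℝ) :
    matAct m n p q (torusMk v) = torusMk (m * v.1 + n * v.2, p * v.1 + q * v.2) := by
  simp only [matAct, torusMk, ← zsmul_eq_mul, AddCircle.coe_add, AddCircle.coe_zsmul]

theorem matAct_adjugate_matAct (m n p q : ℤ) (z : Torus2) :
    matAct q (-n) (-p) m (matAct m n p q z) = (m * q - n * p) • z := by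
  ext1 <;> simp only [matAct, Prod.smul_fst, Prod.smul_snd] <;> module

theorem matAct_matAct_adjugate (m n p q : ℤ) (z : Torus2) :
    matAct m n p q (matAct q (-n) (-p) m z) = (m * q - n * p) • z := by
  simpa only [neg_neg, neg_mul_neg, mul_comm q m] using matAct_adjugate_matAct q (-n) (-p) m z

theorem matAct_bijective_of_isUnit_det {m n p q : ℤ} (hdet : IsUnit (m * q - n * p)) :
    Function.Bijective (matAct m n p q) := by
  have hsmul : Function.Bijective fun z : Torus2 => (m * q - n * p) • z :=
    hdet.smul_bijective
  constructor
  · refine Function.Injective.of_comp (f := matAct q (-n) (-p) m) ?_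
    simpa only [Function.comp_def, matAct_adjugate_matAct] using hsmul.injective
  · refine Function.Surjective.of_comp (g := matAct q (-n) (-p) m) ?_
    simpa only [Function.comp_def, matAct_matAct_adjugate] using hsmul.surjective

theorem kroneckerFlow_eq_add_torusMk (θ t : ℝ) (z : Torus2) :
    kroneckerFlow θ t z = z + torusMk (t * θ, t) :=
  rfl

/- `M` maps the direction `(θ, 1)` to `(mθ + n, pθ + q) = (pθ + q) • (M(θ), 1)`, so orbits of slope
`θ` go to orbits of slope `M(θ)`, with time rescaled by `pθ + q`. -/
theorem matAct_kroneckerFlow {θ : ℝ} (m n : ℤ) {p q : ℤ} (hpq : (p : ℝ) * θ + q ≠ 0)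
    (t : ℝ) (z : Torus2) :
    matAct m n p q (kroneckerFlow θ t z) =
      kroneckerFlow (((m : ℝ) * θ + n) / ((p : ℝ) * θ + q))
        (t * ((p : ℝ) * θ + q)) (matAct m n p q z) := by
  have hfst : (m : ℝ) * (t * θ) + n * t =
      t * ((p : ℝ) * θ + q) * (((m : ℝ) * θ + n) / ((p : ℝ) * θ + q)) := by
    rw [mul_assoc, mul_div_cancel₀ _ hpq]
    ring
  have hsnd : (p : ℝ) * (t * θ) + q * t = t * ((p : ℝ) * θ + q) := by ring
  simp only [kroneckerFlow_eq_add_torusMk, matAct_add, matAct_torusMk, hfst, hsnd]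

theorem stmt0 (θ : ℝ) (m n p q : ℤ)
    (hdet : m * q - n * p = 1 ∨ m * q - n * p = -1)
    (hpq : (p : ℝ) * θ + q ≠ 0) :
    -- the map φ
    ∀ φ : Torus2 × ℝ → Torus2 × ℝ,
      φ = (fun z => (matAct m n p q z.1, z.2 * ((p : ℝ) * θ + q))) →
      -- φ is a bijection
      Function.Bijective φ ∧
      -- φ intertwines the Kronecker flows of angle θ and M(θ)
      (∀ (x : ℝ × ℝ) (t : ℝ),
        matAct m n p q (kroneckerFlow θ t (torusMk x)) =
          kroneckerFlow (((m : ℝ) * θ + n) / ((p : ℝ) * θ + q))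
            (t * ((p : ℝ) * θ + q)) (matAct m n p q (torusMk x))) ∧
      -- consequently, φ is an isomorphism of the transformation groupoids:
      -- it maps composable pairs to composable pairs
      (∀ z w : Torus2 × ℝ,
        w.1 = kroneckerFlow θ (-z.2) z.1 →
          (φ w).1 = kroneckerFlow (((m : ℝ) * θ + n) / ((p : ℝ) * θ + q))
            (-(φ z).2) (φ z).1) ∧
      -- and it respects the composition ([x⃗],t)·([x⃗]−t(θ,1),s) = ([x⃗],t+s)
      (∀ (z w : Torus2 × ℝ),
        w.1 = kroneckerFlow θ (-z.2) z.1 →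
          φ (z.1, z.2 + w.2) = ((φ z).1, (φ z).2 + (φ w).2)) := by
  rintro φ rfl
  have intertwines := matAct_kroneckerFlow m n hpq
  refine ⟨?bijective, fun x t => intertwines t (torusMk x), ?composable, ?multiplicative⟩
  case bijective =>
    exact (matAct_bijective_of_isUnit_det (Int.isUnit_iff.2 hdet)).prodMap
      (mulRight_bijective₀ _ hpq)
  case composable =>
    intro z w hzw
    simp only [hzw, intertwines, neg_mul]
  case multiplicative =>
    intro z w _
    simp only [add_mul]

end
end

section
/- Let θ ∈ ℝ and let X ⊆ 𝕋² be the image of the x-axis, X = {[(t,0)] : t ∈ ℝ}. For (x,y) ∈ ℝ² and s ∈ ℝ, one has [(x,y)] ∈ X and [(x−sθ, y−s)] ∈ X if and only if y ∈ ℤ and s ∈ ℤ. Moreover, on the set R_θ := {(p,s) ∈ 𝕋²×ℝ : p ∈ X and p − s·[(θ,1)] ∈ X}, the assignment ([(x,y)], s) ↦ ([x], s) is a well-defined bijection R_θ → 𝕋×ℤ (where 𝕋 = ℝ/ℤ), and it intertwines the partially defined compositions: the composition (p,s)·(p−s[(θ,1)], s') = (p, s+s') corresponds to ([x],s)·([x−sθ],s')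 = ([x], s+s'). -/
/-!
STATEMENT 2: Reduction of the Kronecker transformation groupoid 𝕋²⋊_θℝ to the
x-axis X ⊆ 𝕋²: membership characterization (y ∈ ℤ and s ∈ ℤ), and the
well-defined bijection R_θ → 𝕋×ℤ, ([(x,y)],s) ↦ ([x],s), intertwining the
partially defined compositions.
-/

noncomputable section

/-- The image of the x-axis in 𝕋². -/
def xAxis : Set Torus2 := {z | ∃ t : ℝ, z = torusMk (t, 0)}

/-- The source of the groupoid element (p, s) of 𝕋²⋊_θℝ, namely p − s·[(θ,1)]. -/
def src (θ : ℝ) (z : Torus2 × ℝ) : Torus2 :=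
  (z.1.1 - ((z.2 * θ : ℝ) : Torus), z.1.2 - ((z.2 : ℝ) : Torus))

/-- The reduction R_θ of 𝕋²⋊_θℝ to the x-axis: both range and source lie in X. -/
def Rset (θ : ℝ) : Set (Torus2 × ℝ) := {z | z.1 ∈ xAxis ∧ src θ z ∈ xAxis}

/-!
The x-axis is the kernel of the second projection `𝕋² → 𝕋`. Hence `(p, s)` lies in the reduction iff
the second coordinates `[y]` of `p` and `[y - s]` of its source both vanish, i.e. iff `[y] = 0` and
`[s] = 0`. So the reduction is `𝕋 × {0} × ℤ`, and times add under composition on both sides.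
-/

theorem mem_xAxis_iff {p : Torus2} : p ∈ xAxis ↔ p.2 = 0 := by
  constructor
  · rintro ⟨t, rfl⟩
    exact QuotientAddGroup.mk_zero _
  · obtain ⟨a, b⟩ := p
    rintro rfl
    obtain ⟨t, rfl⟩ := QuotientAddGroup.mk_surjective a
    exact ⟨t, rfl⟩

theorem torus_coe_eq_zero_iff {y : ℝ} : (y : Torus) = 0 ↔ ∃ k : ℤ, y = k := by
  simp only [AddCircle.coe_eq_zero_iff, zsmul_one, eq_comm (b := y)]

theorem torusMk_mem_xAxis_iff {v : ℝ × ℝ} : torusMk v ∈ xAxis ↔ ∃ k : ℤ, v.2 = k :=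
  mem_xAxis_iff.trans torus_coe_eq_zero_iff

section Source

variable (θ : ℝ)

theorem src_torusMk (v : ℝ × ℝ) (s : ℝ) :
    src θ (torusMk v, s) = torusMk (v.1 - s * θ, v.2 - s) :=
  rfl

theorem src_add (p : Torus2) (s t : ℝ) : src θ (p, s + t) = src θ (src θ (p, s), t) := by
  simp only [src, add_mul, AddCircle.coe_add, sub_sub]

theorem src_mem_xAxis_iff {p : Torus2} (hp : p ∈ xAxis) (s : ℝ) :
    src θ (p, s) ∈ xAxis ↔ ∃ k : ℤ, s = k := by
  rw [mem_xAxis_iff] at hp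
  rw [mem_xAxis_iff, ← torus_coe_eq_zero_iff, src, hp, zero_sub, neg_eq_zero]

end Source

section Reduction

variable {θ : ℝ}

theorem mem_Rset_iff {p : Torus2} {s : ℝ} :
    (p, s) ∈ Rset θ ↔ p ∈ xAxis ∧ ∃ k : ℤ, s = k :=
  and_congr_right fun hp => src_mem_xAxis_iff θ hp s

theorem floor_time_of_mem_Rset {z : Torus2 × ℝ} (hz : z ∈ Rset θ) : (⌊z.2⌋ : ℝ) = z.2 := by
  obtain ⟨k, hk⟩ := (mem_Rset_iff.mp hz).2
  rw [hk, Int.floor_intCast]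

/-- The product `(p, s) · (p - s[(θ, 1)], s') = (p, s + s')` of composable elements `z = (p, s)` and
`w = (p - s[(θ, 1)], s')` of the reduction of the Kronecker groupoid to the x-axis. -/
def reductionComp (z w : {z : Torus2 × ℝ // z ∈ Rset θ}) (h : w.val.1 = src θ z.val) :
    {z : Torus2 × ℝ // z ∈ Rset θ} :=
  ⟨(z.val.1, z.val.2 + w.val.2), z.property.1, by
    rw [src_add, ← h]
    exact w.property.2⟩

variable (θ) in
/-- The bijection `([(x, y)], s) ↦ ([x], s)` from the reduction of the Kronecker groupoid to the
elements of the rotation groupoid `𝕋 ⋊_θ ℤ`. The real number `s` is an integer on the reduction; the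
floor function serves to read it as an element of `ℤ`. -/
def reductionEquiv : {z : Torus2 × ℝ // z ∈ Rset θ} ≃ Torus × ℤ where
  toFun z := (z.val.1.1, ⌊z.val.2⌋)
  invFun q := ⟨((q.1, 0), q.2), mem_Rset_iff.mpr ⟨mem_xAxis_iff.mpr rfl, q.2, rfl⟩⟩
  left_inv := by
    rintro ⟨⟨⟨a, b⟩, s⟩, hz⟩
    have hb : b = 0 := mem_xAxis_iff.mp hz.1
    have hs : (⌊s⌋ : ℝ) = s := floor_time_of_mem_Rset hz
    simp only [hb, hs]
  right_inv q := Prod.ext rfl (Int.floor_intCast q.2)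

theorem reductionEquiv_fst (z : {z : Torus2 × ℝ // z ∈ Rset θ}) :
    (reductionEquiv θ z).1 = z.val.1.1 :=
  rfl

theorem coe_reductionEquiv_snd (z : {z : Torus2 × ℝ // z ∈ Rset θ}) :
    ((reductionEquiv θ z).2 : ℝ) = z.val.2 :=
  floor_time_of_mem_Rset z.property

theorem reductionEquiv_reductionComp (z w : {z : Torus2 × ℝ // z ∈ Rset θ})
    (h : w.val.1 = src θ z.val) :
    reductionEquiv θ (reductionComp z w h) =
      ((reductionEquiv θ z).1, (reductionEquiv θ z).2 + (reductionEquiv θ w).2) := by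
  refine Prod.ext rfl (Int.cast_injective (α := ℝ) ?_)
  simp only [Int.cast_add, coe_reductionEquiv_snd, reductionComp]

end Reduction

theorem stmt2 (θ : ℝ) :
    -- membership characterization
    (∀ x y s : ℝ,
      (torusMk (x, y) ∈ xAxis ∧ torusMk (x - s * θ, y - s) ∈ xAxis) ↔
        ((∃ k : ℤ, y = k) ∧ (∃ k : ℤ, s = k))) ∧
    -- the well-defined bijection R_θ → 𝕋×ℤ, ([(x,y)],s) ↦ ([x],s)
    (∃ e : {z : Torus2 × ℝ // z ∈ Rset θ} ≃ (Torus × ℤ),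
      (∀ z, (e z).1 = z.val.1.1 ∧ ((e z).2 : ℝ) = z.val.2) ∧
      -- it intertwines the partially defined compositions:
      -- (p,s)·(p−s[(θ,1)], s') = (p, s+s') corresponds to
      -- ([x],n)·([x−nθ],n') = ([x], n+n')
      (∀ z w : {z : Torus2 × ℝ // z ∈ Rset θ},
        w.val.1 = src θ z.val →
          ∃ zw : {z : Torus2 × ℝ // z ∈ Rset θ},
            zw.val = (z.val.1, z.val.2 + w.val.2) ∧
            e zw = ((e z).1, (e z).2 + (e w).2))) := by
  refine ⟨fun x y s => ?_, reductionEquiv θ,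
    fun z => ⟨reductionEquiv_fst z, coe_reductionEquiv_snd z⟩,
    fun z w h => ⟨reductionComp z w h, rfl, reductionEquiv_reductionComp z w h⟩⟩
  calc torusMk (x, y) ∈ xAxis ∧ torusMk (x - s * θ, y - s) ∈ xAxis
    _ ↔ (torusMk (x, y), s) ∈ Rset θ := by rw [Rset, Set.mem_ofPred_eq, src_torusMk]
    _ ↔ torusMk (x, y) ∈ xAxis ∧ ∃ k : ℤ, s = k := mem_Rset_iff
    _ ↔ (∃ k : ℤ, y = k) ∧ ∃ k : ℤ, s = k := and_congr_left' torusMk_mem_xAxis_iff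

end
end

section
/- Let θ ∈ ℝ and g = [[a,b],[c,d]] ∈ GL₂(ℤ) with μ(g) := (aθ+b) − (cθ+d)θ ≠ 0. Then for t₁, t₂ ∈ ℝ the following are equivalent: (i) t₁·(aθ+b, cθ+d) − t₂·(θ, 1) ∈ ℤ²; (ii) there exist k, l ∈ ℤ such that t₁ = (k+lθ)/μ(g) and t₂ = (k(cθ+d) + l(aθ+b))/μ(g). Moreover the integers k, l in (ii) are unique for given (t₁,t₂) when θ is irrational. -/
/-!
STATEMENT 4: For θ ∈ ℝ and g = [[a,b],[c,d]] ∈ GL₂(ℤ) with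
μ(g) = (aθ+b) − (cθ+d)θ ≠ 0, the condition
t₁·(aθ+b, cθ+d) − t₂·(θ,1) ∈ ℤ² is equivalent to the existence of k, l ∈ ℤ with
t₁ = (k+lθ)/μ(g) and t₂ = (k(cθ+d)+l(aθ+b))/μ(g); such k, l are unique for
given (t₁,t₂) when θ is irrational.
-/

/-!
Write `p = aθ + b` and `q = cθ + d`. Condition (i) is the linear system
`t₁ (p, q) - t₂ (θ, 1) = (x, y)` with integral right-hand side. Its determinant is, up to sign,
`μ = p - qθ ≠ 0`, so Cramer's rule solves it, and (ii) is the solution with `k = x` and `l = -y`.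
Since `μ t₁ = k + lθ`, uniqueness of `k` and `l` is the linear independence of `1` and `θ` over `ℤ`.
-/

theorem mul_sub_mul_eq_and_iff_eq_div {K : Type*} [Field K] {p q r s : K}
    (hdet : p * s - q * r ≠ 0) (t₁ t₂ x y : K) :
    (t₁ * p - t₂ * r = x ∧ t₁ * q - t₂ * s = y) ↔
      (t₁ = (x * s - y * r) / (p * s - q * r) ∧ t₂ = (x * q - y * p) / (p * s - q * r)) := by
  rw [eq_div_iff hdet, eq_div_iff hdet]
  constructor
  · rintro ⟨hx, hy⟩
    exact ⟨by linear_combination s * hx - r * hy, by linear_combination q * hx - p * hy⟩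
  · rintro ⟨h₁, h₂⟩
    exact ⟨mul_right_cancel₀ hdet (by linear_combination p * h₁ - r * h₂),
      mul_right_cancel₀ hdet (by linear_combination q * h₁ - s * h₂)⟩

theorem linearIndependent_int_one_of_irrational {θ : ℝ} (hθ : Irrational θ) :
    LinearIndependent ℤ ![1, θ] := by
  rw [LinearIndependent.pair_iff]
  intro m n h
  have hmn : (m : ℝ) + n * θ = 0 := by simpa using h
  have hn : n = 0 := by
    by_contra hn
    exact not_irrational_zero (hmn ▸ (hθ.intCast_mul hn).intCast_add m)
  exact ⟨by simpa [hn] using hmn, hn⟩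

theorem stmt4_general {K : Type*} [Field K] (θ p q : K) (hμ : p - q * θ ≠ 0) (t₁ t₂ : K) :
    ((∃ k₁ k₂ : ℤ, t₁ * p - t₂ * θ = (k₁ : K) ∧ t₁ * q - t₂ = (k₂ : K)) ↔
      (∃ k l : ℤ, t₁ = ((k : K) + (l : K) * θ) / (p - q * θ) ∧
        t₂ = ((k : K) * q + (l : K) * p) / (p - q * θ))) ∧
    (LinearIndependent ℤ ![1, θ] →
      ∀ k l k' l' : ℤ,
        (t₁ = ((k : K) + (l : K) * θ) / (p - q * θ) ∧
          t₂ = ((k : K) * q + (l : K) * p) / (p - q * θ)) →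
        (t₁ = ((k' : K) + (l' : K) * θ) / (p - q * θ) ∧
          t₂ = ((k' : K) * q + (l' : K) * p) / (p - q * θ)) →
        k = k' ∧ l = l') := by
  refine ⟨exists_congr fun x => (Equiv.neg ℤ).exists_congr fun y => ?_, ?_⟩
  · have hdet : p * 1 - q * θ ≠ 0 := by rwa [mul_one]
    simpa [sub_eq_add_neg] using mul_sub_mul_eq_and_iff_eq_div hdet t₁ t₂ x y
  · rintro hθ k l k' l' ⟨h, -⟩ ⟨h', -⟩
    have hnum : (k : K) + l * θ = k' + l' * θ := (div_left_inj' hμ).mp (h.symm.trans h')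
    exact hθ.eq_of_pair (by simpa using hnum)

theorem stmt4 (θ : ℝ) (a b c d : ℤ)
    (hdet : a * d - b * c = 1 ∨ a * d - b * c = -1)
    (hμ : ((a : ℝ) * θ + b) - ((c : ℝ) * θ + d) * θ ≠ 0)
    (t₁ t₂ : ℝ) :
    -- (i) ↔ (ii)
    ((∃ k₁ k₂ : ℤ,
        t₁ * ((a : ℝ) * θ + b) - t₂ * θ = (k₁ : ℝ) ∧
        t₁ * ((c : ℝ) * θ + d) - t₂ = (k₂ : ℝ)) ↔
      (∃ k l : ℤ,
        t₁ = ((k : ℝ) + (l : ℝ) * θ) / (((a : ℝ) * θ + b) - ((c : ℝ) * θ + d) * θ) ∧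
        t₂ = ((k : ℝ) * ((c : ℝ) * θ + d) + (l : ℝ) * ((a : ℝ) * θ + b)) /
              (((a : ℝ) * θ + b) - ((c : ℝ) * θ + d) * θ))) ∧
    -- uniqueness of k, l in (ii) for irrational θ
    (Irrational θ →
      ∀ k l k' l' : ℤ,
        (t₁ = ((k : ℝ) + (l : ℝ) * θ) / (((a : ℝ) * θ + b) - ((c : ℝ) * θ + d) * θ) ∧
         t₂ = ((k : ℝ) * ((c : ℝ) * θ + d) + (l : ℝ) * ((a : ℝ) * θ + b)) /
              (((a : ℝ) * θ + b) - ((c : ℝ) * θ + d) * θ)) →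
        (t₁ = ((k' : ℝ) + (l' : ℝ) * θ) / (((a : ℝ) * θ + b) - ((c : ℝ) * θ + d) * θ) ∧
         t₂ = ((k' : ℝ) * ((c : ℝ) * θ + d) + (l' : ℝ) * ((a : ℝ) * θ + b)) /
              (((a : ℝ) * θ + b) - ((c : ℝ) * θ + d) * θ)) →
        k = k' ∧ l = l') :=
  (stmt4_general θ (a * θ + b) (c * θ + d) hμ t₁ t₂).imp_right fun huniq hθ =>
    huniq (linearIndependent_int_one_of_irrational hθ)
end

section
/- Let θ ∈ ℝ, let g = [[a,b],[0,a]] ∈ SL₂(ℤ) (so a = ±1) with b ≠ 0, and define 𝒵_g := {(r₁, r₂, ([v],[w])) ∈ ℝ²×𝕋² : g·([(v,0)] + r₁·[(θ,1)]) = [(w,0)] + r₂·[(θ,1)] in 𝕋²}. Then for every (r₁,r₂,([v],[w])) ∈ 𝒵_g one has r₂ − a·r₁ ∈ ℤ, and the map 𝒵_g → 𝕋×ℝ×ℤ, (r₁, r₂, ([v],[w])) ↦ ([v], r₁, r₂ − a·r₁), is a bijection. -/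
/-!
STATEMENT 5: For θ ∈ ℝ and g = [[a,b],[0,a]] ∈ SL₂(ℤ) with b ≠ 0, the set
𝒵_g = {(r₁,r₂,([v],[w])) : g·([(v,0)] + r₁[(θ,1)]) = [(w,0)] + r₂[(θ,1)]}
satisfies r₂ − a r₁ ∈ ℤ on 𝒵_g, and (r₁,r₂,([v],[w])) ↦ ([v], r₁, r₂ − a r₁)
is a bijection 𝒵_g → 𝕋×ℝ×ℤ.
-/

noncomputable section

/-- The set 𝒵_g ⊆ ℝ²×𝕋² for g = [[a,b],[0,a]]. An element is (r₁, r₂, ([v],[w])). -/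
def Zset (θ : ℝ) (a b : ℤ) : Set (ℝ × ℝ × Torus2) :=
  {z | matAct a b 0 a ((z.2.2.1, (0 : Torus)) + torusMk (z.1 * θ, z.1))
        = ((z.2.2.2, (0 : Torus)) + torusMk (z.2.1 * θ, z.2.1))}

/-!
The second circle coordinate of the defining equation of `𝒵_g` reads `a r₁ = r₂` in `ℝ/ℤ`, so
`r₂ = a r₁ + k` with `k` an integer. The first coordinate can be solved for `[w]` in terms of
`[v]`, `r₁` and `r₂`. Hence `𝒵_g` is a graph over the free parameters `([v], r₁, k)`.
-/

theorem zsmul_coe_addCircle_eq_coe_iff {G : Type*} [AddCommGroup G] {p x y : G} {a : ℤ} :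
    a • (x : AddCircle p) = (y : AddCircle p) ↔ ∃ k : ℤ, y - a • x = k • p := by
  rw [eq_comm, ← sub_eq_zero, ← AddCircle.coe_zsmul, ← AddCircle.coe_sub,
    AddCircle.coe_eq_zero_iff]
  simp only [eq_comm]

/-- The class `[w]` that the first coordinate of the equation
`g·([(v,0)] + r₁·[(θ,1)]) = [(w,0)] + r₂·[(θ,1)]`, with `g = [[a,b],[0,a]]`, forces on a point
of `𝒵_g`; the argument `v` is the class `[v]`. -/
def targetClass (θ : ℝ) (a b : ℤ) (v : Torus) (r₁ r₂ : ℝ) : Torus :=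
  a • (v + ((r₁ * θ : ℝ) : Torus)) + b • (r₁ : Torus) - ((r₂ * θ : ℝ) : Torus)

section Zset

variable {θ : ℝ} {a b : ℤ} {z : ℝ × ℝ × Torus2}

theorem mem_Zset_iff :
    z ∈ Zset θ a b ↔ z.2.2.2 = targetClass θ a b z.2.2.1 z.1 z.2.1 ∧
      ∃ k : ℤ, z.2.1 - (a : ℝ) * z.1 = (k : ℝ) := by
  have first_coord (v w : Torus) (r₁ r₂ : ℝ) :
      a • (v + ((r₁ * θ : ℝ) : Torus)) + b • (r₁ : Torus) = w + ((r₂ * θ : ℝ) : Torus) ↔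
        w = targetClass θ a b v r₁ r₂ := by
    rw [targetClass, eq_sub_iff_add_eq, eq_comm]
  have second_coord (r₁ r₂ : ℝ) :
      a • (r₁ : Torus) = (r₂ : Torus) ↔ ∃ k : ℤ, r₂ - (a : ℝ) * r₁ = (k : ℝ) := by
    simp only [zsmul_coe_addCircle_eq_coe_iff, zsmul_eq_mul, mul_one]
  simp only [Zset, matAct, torusMk, Set.mem_ofPred_eq, Prod.mk_add_mk, Prod.mk.injEq, zero_add,
    zero_smul, first_coord, second_coord]

theorem intCast_floor_sub_of_mem_Zset (hz : z ∈ Zset θ a b) :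
    (⌊z.2.1 - (a : ℝ) * z.1⌋ : ℝ) = z.2.1 - (a : ℝ) * z.1 := by
  obtain ⟨k, hk⟩ := (mem_Zset_iff.1 hz).2
  rw [hk, Int.floor_intCast]

theorem mk_targetClass_mem_Zset (θ : ℝ) (a b : ℤ) (v : Torus) (r : ℝ) (k : ℤ) :
    (r, a * r + k, v, targetClass θ a b v r (a * r + k)) ∈ Zset θ a b :=
  mem_Zset_iff.2 ⟨rfl, k, add_sub_cancel_left _ _⟩

end Zset

/-- The parametrization of `𝒵_g` by `𝕋 × ℝ × ℤ`, sending `(r₁, r₂, ([v],[w]))` to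
`([v], r₁, r₂ - a r₁)`. The integer `r₂ - a r₁` is encoded as its own floor. -/
def zsetEquiv (θ : ℝ) (a b : ℤ) : Zset θ a b ≃ Torus × ℝ × ℤ where
  toFun z := (z.1.2.2.1, z.1.1, ⌊z.1.2.1 - (a : ℝ) * z.1.1⌋)
  invFun p := ⟨_, mk_targetClass_mem_Zset θ a b p.1 p.2.1 p.2.2⟩
  left_inv := by
    rintro ⟨⟨r₁, r₂, v, w⟩, hz⟩
    have r₂_eq : (a : ℝ) * r₁ + ⌊r₂ - (a : ℝ) * r₁⌋ = r₂ := by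
      rw [intCast_floor_sub_of_mem_Zset hz, add_sub_cancel]
    have w_eq : w = targetClass θ a b v r₁ r₂ := (mem_Zset_iff.1 hz).1
    simp only [r₂_eq, w_eq]
  right_inv := by
    rintro ⟨v, r, k⟩
    simp only [add_sub_cancel_left, Int.floor_intCast]

theorem stmt5_general (θ : ℝ) (a b : ℤ) :
    (∀ z ∈ Zset θ a b, ∃ k : ℤ, z.2.1 - (a : ℝ) * z.1 = (k : ℝ)) ∧
    (∃ e : {z : ℝ × ℝ × Torus2 // z ∈ Zset θ a b} ≃ (Torus × ℝ × ℤ),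
      ∀ z, (e z).1 = z.val.2.2.1 ∧ (e z).2.1 = z.val.1 ∧
        ((e z).2.2 : ℝ) = z.val.2.1 - (a : ℝ) * z.val.1) :=
  ⟨fun _ hz => (mem_Zset_iff.1 hz).2,
    zsetEquiv θ a b, fun z => ⟨rfl, rfl, intCast_floor_sub_of_mem_Zset z.2⟩⟩

theorem stmt5 (θ : ℝ) (a b : ℤ) (ha : a * a = 1) (hb : b ≠ 0) :
    -- r₂ − a·r₁ is an integer on 𝒵_g
    (∀ z ∈ Zset θ a b, ∃ k : ℤ, z.2.1 - (a : ℝ) * z.1 = (k : ℝ)) ∧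
    -- (r₁, r₂, ([v],[w])) ↦ ([v], r₁, r₂ − a·r₁) is a bijection 𝒵_g → 𝕋×ℝ×ℤ
    (∃ e : {z : ℝ × ℝ × Torus2 // z ∈ Zset θ a b} ≃ (Torus × ℝ × ℤ),
      ∀ z, (e z).1 = z.val.2.2.1 ∧ (e z).2.1 = z.val.1 ∧
        ((e z).2.2 : ℝ) = z.val.2.1 - (a : ℝ) * z.val.1) :=
  stmt5_general θ a b

end
end

section
/- Let H and H' be complex Hilbert spaces, let D be a densely defined self-adjoint operator on H and D' a densely defined self-adjoint operator on H', and let T : H' → H be a bounded linear operator. Fix a sign ε ∈ {+1, −1}. Assume that the set 𝒟 := {ζ ∈ dom(D') : Tζ ∈ dom(D)} is dense in H', and that there is a constant C ≥ 0 with ‖D(Tζ) + ε·T(D'ζ)‖ ≤ C‖ζ‖ for all ζ ∈ 𝒟. Then there is a constant C' ≥ 0 such that ‖T*(Dξ) + ε·D'(T*ξ)‖ ≤ C'‖ξ‖ for all ξ ∈ dom(D) with T*ξ ∈ dom(D'); that is, the operator T*D + ε·D'T* on this domain extends to a bounded operator H → H'. -/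
/-!
STATEMENT 11: If D, D' are densely defined self-adjoint operators on Hilbert
spaces H, H', T : H' → H is bounded, ε = ±1, the set
𝒟 = {ζ ∈ dom D' : Tζ ∈ dom D} is dense, and ‖D(Tζ) + ε T(D'ζ)‖ ≤ C‖ζ‖ on 𝒟,
then there is C' with ‖T*(Dξ) + ε D'(T*ξ)‖ ≤ C'‖ξ‖ for all ξ ∈ dom D with
T*ξ ∈ dom D'; i.e. T*D + ε D'T* extends to a bounded operator.
-/

/-!
The operators `D T + ε T D'` and `T* D* + conj ε D'* T*`, on their natural domains, are formal
adjoints of each other. A bound on a densely defined operator passes to each of its formal adjoints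
with the same constant, because the norm of a vector is determined by its inner products with a
dense set.
-/

open scoped ComplexConjugate

section LinearPMap

variable {R E F G : Type*} [Ring R] [AddCommGroup E] [Module R E] [AddCommGroup F] [Module R F]
  [AddCommGroup G] [Module R G]

/-- The composition `A ∘ T` of a partially defined operator `A` with an everywhere defined linear
map `T`, on its natural domain `{x | T x ∈ dom A}`. -/
def precompLinearMap (A : F →ₗ.[R] G) (T : E →ₗ[R] F) : E →ₗ.[R] G :=
  A.comp (T.toPMap (A.domain.comap T)) fun x => x.2

end LinearPMap

section FormalAdjoint

variable {𝕜 E F G : Type*} [RCLike 𝕜]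
  [NormedAddCommGroup E] [InnerProductSpace 𝕜 E]
  [NormedAddCommGroup F] [InnerProductSpace 𝕜 F]
  [NormedAddCommGroup G] [InnerProductSpace 𝕜 G]

theorem norm_le_of_dense_of_forall_norm_inner_le {s : Set E} (hs : Dense s) {x : E} {C : ℝ}
    (hC : 0 ≤ C) (h : ∀ v ∈ s, ‖inner 𝕜 x v‖ ≤ C * ‖v‖) : ‖x‖ ≤ C := by
  have hclosed : IsClosed {v : E | ‖inner 𝕜 x v‖ ≤ C * ‖v‖} :=
    isClosed_le (by fun_prop) (by fun_prop)
  rw [← innerSL_apply_norm (𝕜 := 𝕜) x]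
  exact (innerSL 𝕜 x).opNorm_le_bound hC fun v => closure_minimal h hclosed (hs v)

theorem norm_apply_le_of_isFormalAdjoint {A : E →ₗ.[𝕜] F} {A' : F →ₗ.[𝕜] E}
    (h : A.IsFormalAdjoint A') (hA : Dense (A.domain : Set E)) {C : ℝ} (hC : 0 ≤ C)
    (hbound : ∀ x : A.domain, ‖A x‖ ≤ C * ‖(x : E)‖) (y : A'.domain) :
    ‖A' y‖ ≤ C * ‖(y : F)‖ := by
  refine norm_le_of_dense_of_forall_norm_inner_le (𝕜 := 𝕜) hA (by positivity) fun x hx => ?_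
  calc ‖inner 𝕜 (A' y) x‖ = ‖inner 𝕜 (y : F) (A ⟨x, hx⟩)‖ := by rw [h.symm y ⟨x, hx⟩]
    _ ≤ ‖(y : F)‖ * ‖A ⟨x, hx⟩‖ := norm_inner_le_norm _ _
    _ ≤ ‖(y : F)‖ * (C * ‖x‖) := by gcongr; exact hbound ⟨x, hx⟩
    _ = C * ‖(y : F)‖ * ‖x‖ := by ring

theorem isFormalAdjoint_add {A B : E →ₗ.[𝕜] F} {A' B' : F →ₗ.[𝕜] E}
    (hA : A.IsFormalAdjoint A') (hB : B.IsFormalAdjoint B') :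
    (A + B).IsFormalAdjoint (A' + B') := fun x y => by
  rw [LinearPMap.add_apply, LinearPMap.add_apply, inner_add_left, inner_add_right]
  exact congrArg₂ (· + ·) (hA ⟨x, x.2.1⟩ ⟨y, y.2.1⟩) (hB ⟨x, x.2.2⟩ ⟨y, y.2.2⟩)

theorem isFormalAdjoint_smul {A : E →ₗ.[𝕜] F} {A' : F →ₗ.[𝕜] E} (h : A.IsFormalAdjoint A')
    (c : 𝕜) : (c • A).IsFormalAdjoint (conj c • A') := fun x y => by
  rw [LinearPMap.smul_apply, LinearPMap.smul_apply, inner_smul_left, inner_smul_right]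
  exact congrArg (conj c * ·) (h x y)

theorem isFormalAdjoint_precompLinearMap {A : F →ₗ.[𝕜] G} {A' : G →ₗ.[𝕜] F} {T : E →ₗ[𝕜] F}
    {S : F →ₗ[𝕜] E} (hA : A.IsFormalAdjoint A')
    (hTS : ∀ x y, inner 𝕜 (T x) y = inner 𝕜 x (S y)) :
    (precompLinearMap A T).IsFormalAdjoint (S.compPMap A') := fun x y =>
  (hA ⟨T x, x.2⟩ y).trans (hTS x (A' y))

theorem isFormalAdjoint_self_of_adjoint_eq [CompleteSpace E] {A : E →ₗ.[𝕜] E}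
    (hA : Dense (A.domain : Set E)) (h : A.adjoint = A) : A.IsFormalAdjoint A := by
  simpa only [h] using LinearPMap.adjoint_isFormalAdjoint hA

end FormalAdjoint

theorem stmt11_general {𝕜 E F : Type*} [RCLike 𝕜]
    [NormedAddCommGroup E] [InnerProductSpace 𝕜 E] [NormedAddCommGroup F] [InnerProductSpace 𝕜 F]
    {A A' : E →ₗ.[𝕜] E} {B B' : F →ₗ.[𝕜] F}
    (hA : A.IsFormalAdjoint A') (hB : B.IsFormalAdjoint B')
    {T : F →ₗ[𝕜] E} {S : E →ₗ[𝕜] F} (hTS : ∀ x y, inner 𝕜 (T x) y = inner 𝕜 x (S y)) (ε : 𝕜)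
    (hdense : Dense {ζ : F | ζ ∈ B.domain ∧ T ζ ∈ A.domain}) {C : ℝ} (hC : 0 ≤ C)
    (hbound : ∀ (ζ : F) (hζ : ζ ∈ B.domain) (hTζ : T ζ ∈ A.domain),
      ‖A ⟨T ζ, hTζ⟩ + ε • T (B ⟨ζ, hζ⟩)‖ ≤ C * ‖ζ‖)
    (ξ : E) (hξ : ξ ∈ A'.domain) (hSξ : S ξ ∈ B'.domain) :
    ‖S (A' ⟨ξ, hξ⟩) + conj ε • B' ⟨S ξ, hSξ⟩‖ ≤ C * ‖ξ‖ := by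
  have hST : ∀ x y, inner 𝕜 (S x) y = inner 𝕜 x (T y) := fun x y => by
    rw [← inner_conj_symm, ← hTS, inner_conj_symm]
  have hadj : (precompLinearMap A T + ε • T.compPMap B).IsFormalAdjoint
      (S.compPMap A' + conj ε • precompLinearMap B' S) :=
    isFormalAdjoint_add (isFormalAdjoint_precompLinearMap hA hTS)
      (isFormalAdjoint_smul (isFormalAdjoint_precompLinearMap hB.symm hST).symm ε)
  have hdom : Dense ((precompLinearMap A T + ε • T.compPMap B).domain : Set F) :=
    hdense.mono fun _ hζ => hζ.symm
  exact norm_apply_le_of_isFormalAdjoint hadj hdom hC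
    (fun ζ => hbound ζ ζ.2.2 ζ.2.1) ⟨ξ, hξ, hSξ⟩

theorem stmt11 {H H' : Type*}
    [NormedAddCommGroup H] [InnerProductSpace ℂ H] [CompleteSpace H]
    [NormedAddCommGroup H'] [InnerProductSpace ℂ H'] [CompleteSpace H']
    (D : H →ₗ.[ℂ] H) (D' : H' →ₗ.[ℂ] H')
    (hDdense : Dense (D.domain : Set H)) (hD'dense : Dense (D'.domain : Set H'))
    (hDsa : D.adjoint = D) (hD'sa : D'.adjoint = D')
    (T : H' →L[ℂ] H) (ε : ℂ) (hε : ε = 1 ∨ ε = -1)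
    (hdense : Dense {ζ : H' | ζ ∈ D'.domain ∧ T ζ ∈ D.domain})
    (C : ℝ) (hC : 0 ≤ C)
    (hbound : ∀ (ζ : H') (hζ : ζ ∈ D'.domain) (hTζ : T ζ ∈ D.domain),
      ‖D ⟨T ζ, hTζ⟩ + ε • T (D' ⟨ζ, hζ⟩)‖ ≤ C * ‖ζ‖) :
    ∃ C' : ℝ, 0 ≤ C' ∧
      ∀ (ξ : H) (hξ : ξ ∈ D.domain)
        (hTξ : ContinuousLinearMap.adjoint T ξ ∈ D'.domain),
        ‖ContinuousLinearMap.adjoint T (D ⟨ξ, hξ⟩)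
            + ε • D' ⟨ContinuousLinearMap.adjoint T ξ, hTξ⟩‖ ≤ C' * ‖ξ‖ := by
  have hε_conj : conj ε = ε := by rcases hε with rfl | rfl <;> simp
  refine ⟨C, hC, fun ξ hξ hTξ => ?_⟩
  simpa only [hε_conj] using! stmt11_general (T := T.toLinearMap) (S := T.adjoint.toLinearMap)
    (isFormalAdjoint_self_of_adjoint_eq hDdense hDsa)
    (isFormalAdjoint_self_of_adjoint_eq hD'dense hD'sa)
    (fun x y => (T.adjoint_inner_right x y).symm) ε hdense hC hbound ξ hξ hTξ
end

section
/- Fix θ ∈ ℝ and a nonzero integer b. For F ∈ 𝒮₂ define (ΞF)(k,[x],r,s) := ∫_ℝ F(k, [x−kθ], b(r+s+k), t)·e^{−2πits} dt and (Ξ'F)(k,[x],r,s) := ∫_ℝ F(k, [x+kθ], r/b − q − k, q)·e^{2πiqs} dq. Then Ξ and Ξ' map 𝒮₂ into 𝒮₂ and are mutually inverse bijections of 𝒮₂: Ξ'(ΞF) = F and Ξ(Ξ'F) = F for all F ∈ 𝒮₂. -/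
noncomputable section

open MeasureTheory

/-- Partial derivative in the first real variable. -/
noncomputable def pdr (f : ℝ → ℝ → ℂ) : ℝ → ℝ → ℂ :=
  fun r s => deriv (fun u => f u s) r

/-- Partial derivative in the second real variable. -/
noncomputable def pds (f : ℝ → ℝ → ℂ) : ℝ → ℝ → ℂ :=
  fun r s => deriv (fun u => f r u) s

/-- Iterated mixed partial derivative ∂^α in the two real variables. -/
noncomputable def pdMulti (α : ℕ × ℕ) (f : ℝ → ℝ → ℂ) : ℝ → ℝ → ℂ :=
  pdr^[α.1] (pds^[α.2] f)

/-- The Schwartz–Bruhat condition for a function F : ℤ×𝕋×ℝ² → ℂ: F is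
continuous, smooth in the two real variables, and all seminorms
‖F‖_{N,α} = sup (|k|^N + |r|^N + |s|^N + 1)·|∂^α_{(r,s)}F| are finite. -/
def IsSchwartzBruhat (F : ℤ → Torus → ℝ → ℝ → ℂ) : Prop :=
  (∀ k : ℤ, Continuous fun p : Torus × ℝ × ℝ => F k p.1 p.2.1 p.2.2) ∧
  (∀ (k : ℤ) (v : Torus), ContDiff ℝ (⊤ : ℕ∞) fun p : ℝ × ℝ => F k v p.1 p.2) ∧
  (∀ (N : ℕ) (α : ℕ × ℕ), ∃ C : ℝ, ∀ (k : ℤ) (v : Torus) (r s : ℝ),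
    (|(k : ℝ)| ^ N + |r| ^ N + |s| ^ N + 1) * ‖pdMulti α (F k v) r s‖ ≤ C)

/-- The seminorm ‖F‖_{N,α} of a Schwartz–Bruhat function. -/
noncomputable def SBseminorm (F : ℤ → Torus → ℝ → ℝ → ℂ) (N : ℕ) (α : ℕ × ℕ) : ℝ :=
  ⨆ p : ℤ × Torus × ℝ × ℝ,
    (|(p.1 : ℝ)| ^ N + |p.2.2.1| ^ N + |p.2.2.2| ^ N + 1) *
      ‖pdMulti α (F p.1 p.2.1) p.2.2.1 p.2.2.2‖

/-- The map Ξ: (ΞF)(k,[x],r,s) = ∫ F(k, [x−kθ], b(r+s+k), t)·e^{−2πits} dt. -/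
noncomputable def Xi (θ : ℝ) (b : ℤ) (F : ℤ → Torus → ℝ → ℝ → ℂ) :
    ℤ → Torus → ℝ → ℝ → ℂ :=
  fun k v r s => ∫ t : ℝ,
    F k (v - (((k : ℝ) * θ : ℝ) : Torus)) ((b : ℝ) * (r + s + (k : ℝ))) t *
      Complex.exp (((-(2 * Real.pi * t * s) : ℝ) : ℂ) * Complex.I)

/-- The map Ξ': (Ξ'F)(k,[x],r,s) = ∫ F(k, [x+kθ], r/b − q − k, q)·e^{2πiqs} dq. -/
noncomputable def Xi' (θ : ℝ) (b : ℤ) (F : ℤ → Torus → ℝ → ℝ → ℂ) :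
    ℤ → Torus → ℝ → ℝ → ℂ :=
  fun k v r s => ∫ q : ℝ,
    F k (v + (((k : ℝ) * θ : ℝ) : Torus)) (r / (b : ℝ) - q - (k : ℝ)) q *
      Complex.exp (((2 * Real.pi * q * s : ℝ) : ℂ) * Complex.I)

/-!
On the family of functions `(r, s) ↦ F(k, [v], r, s)`, indexed by `(k, [v])`, the map `Ξ` is the
Fourier transform in the last variable followed by the substitution
`[v] ↦ [v - kθ]`, `r ↦ b(r + s + k)`; `Ξ'` is the inverse substitution followed by the inverse
Fourier transform. Fourier inversion in the last variable then makes the two maps mutually inverse.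
The substitutions preserve decay because each of the norms of `(k, r, s)` and of
`(k, b(r + s + k), s)` bounds the other up to a constant. For the partial Fourier transform, the
derivative is again a partial Fourier transform of a family of the same kind, so only the decay of
the transform itself is at issue: integration by parts trades decay in the frequency for
derivatives, and decay in the parameters is inherited under the integral sign.
-/

open scoped ContDiff FourierTransform

universe u

section RapidDecay

variable {X Y V W : Type*} [SeminormedAddCommGroup X] [SeminormedAddCommGroup Y]
  [NormedAddCommGroup V] [NormedAddCommGroup W]

/-- Decay of a function faster than every power of the norm of its argument. -/
def RapidDecay (f : X → V) : Prop :=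
  ∀ N : ℕ, ∃ C : ℝ, ∀ x, (1 + ‖x‖) ^ N * ‖f x‖ ≤ C

namespace RapidDecay

theorem of_norm_le {f : X → V} {g : X → W} (hf : RapidDecay f) {K : ℝ} (m : ℕ)
    (h : ∀ x, ‖g x‖ ≤ K * (1 + ‖x‖) ^ m * ‖f x‖) : RapidDecay g := by
  intro N
  obtain ⟨C, hC⟩ := hf (N + m)
  refine ⟨|K| * C, fun x => ?_⟩
  calc (1 + ‖x‖) ^ N * ‖g x‖
      ≤ (1 + ‖x‖) ^ N * (|K| * (1 + ‖x‖) ^ m * ‖f x‖) := by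
        gcongr
        exact (h x).trans (by gcongr; exact le_abs_self K)
    _ = |K| * ((1 + ‖x‖) ^ (N + m) * ‖f x‖) := by ring
    _ ≤ |K| * C := by gcongr; exact hC x

protected theorem mono {f : X → V} {g : X → W} (hf : RapidDecay f) (h : ∀ x, ‖g x‖ ≤ ‖f x‖) :
    RapidDecay g :=
  hf.of_norm_le (K := 1) 0 (by simpa using h)

protected theorem norm {f : X → V} (hf : RapidDecay f) : RapidDecay fun x => ‖f x‖ :=
  hf.mono fun x => (norm_norm (f x)).le

protected theorem add {f g : X → V} (hf : RapidDecay f) (hg : RapidDecay g) :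
    RapidDecay fun x => f x + g x := by
  intro N
  obtain ⟨C, hC⟩ := hf N
  obtain ⟨D, hD⟩ := hg N
  refine ⟨C + D, fun x => ?_⟩
  calc (1 + ‖x‖) ^ N * ‖f x + g x‖
      ≤ (1 + ‖x‖) ^ N * (‖f x‖ + ‖g x‖) := by gcongr; exact norm_add_le _ _
    _ ≤ C + D := by rw [mul_add]; exact add_le_add (hC x) (hD x)

protected theorem sum {κ : Type*} {s : Finset κ} {f : κ → X → V} (hf : ∀ i ∈ s, RapidDecay (f i)) :
    RapidDecay fun x => ∑ i ∈ s, f i x := by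
  classical
  induction s using Finset.induction_on with
  | empty => exact fun _ => ⟨0, by simp⟩
  | insert i s his ih =>
    simp only [Finset.sum_insert his]
    exact (hf i (s.mem_insert_self i)).add (ih fun j hj => hf j (Finset.mem_insert_of_mem hj))

protected theorem comp {f : X → V} (hf : RapidDecay f) {a : Y → X} {K : ℝ}
    (h : ∀ y, 1 + ‖y‖ ≤ K * (1 + ‖a y‖)) : RapidDecay (f ∘ a) := by
  intro N
  obtain ⟨C, hC⟩ := hf N
  refine ⟨|K| ^ N * C, fun y => ?_⟩
  calc (1 + ‖y‖) ^ N * ‖f (a y)‖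
      ≤ (|K| * (1 + ‖a y‖)) ^ N * ‖f (a y)‖ := by
        gcongr
        exact (h y).trans (by gcongr; exact le_abs_self K)
    _ = |K| ^ N * ((1 + ‖a y‖) ^ N * ‖f (a y)‖) := by rw [mul_pow, mul_assoc]
    _ ≤ |K| ^ N * C := by gcongr; exact hC (a y)

theorem exists_norm_le_inv_one_add_sq {f : X × ℝ → V} (hf : RapidDecay f) :
    ∃ C : ℝ, ∀ x t, ‖f (x, t)‖ ≤ C * (1 + t ^ 2)⁻¹ := by
  obtain ⟨C, hC⟩ := hf 2
  refine ⟨C, fun x t => ?_⟩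
  rw [← div_eq_mul_inv, le_div_iff₀ (by positivity), mul_comm]
  refine le_trans ?_ (hC (x, t))
  gcongr
  have ht : |t| ≤ ‖(x, t)‖ := norm_snd_le (x, t)
  nlinarith [abs_nonneg t, sq_abs t]

end RapidDecay

end RapidDecay

/-- A family of Schwartz functions on `E` that decays rapidly, together with all its derivatives,
jointly in the variable and in the parameter `i : ι`; the dependence on `i` need not be
continuous. -/
structure IsSchwartzFamily {ι E V : Type*} [SeminormedAddCommGroup ι] [NormedAddCommGroup E]
    [NormedSpace ℝ E] [NormedAddCommGroup V] [NormedSpace ℝ V] (f : ι → E → V) : Prop where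
  contDiff : ∀ i, ContDiff ℝ ∞ (f i)
  rapidDecay_iteratedFDeriv :
    ∀ n : ℕ, RapidDecay fun p : ι × E => iteratedFDeriv ℝ n (f p.1) p.2

namespace IsSchwartzFamily

section Closure

variable {ι κ E E' V W : Type*} [SeminormedAddCommGroup ι] [SeminormedAddCommGroup κ]
  [NormedAddCommGroup E] [NormedSpace ℝ E] [NormedAddCommGroup E'] [NormedSpace ℝ E']
  [NormedAddCommGroup V] [NormedSpace ℝ V] [NormedAddCommGroup W] [NormedSpace ℝ W]
  {f g : ι → E → V}

theorem rapidDecay (hf : IsSchwartzFamily f) : RapidDecay fun p : ι × E => f p.1 p.2 :=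
  (hf.rapidDecay_iteratedFDeriv 0).mono fun _ => norm_iteratedFDeriv_zero.ge

protected theorem fderiv (hf : IsSchwartzFamily f) : IsSchwartzFamily fun i => fderiv ℝ (f i) where
  contDiff i := (hf.contDiff i).fderiv_right (by simp)
  rapidDecay_iteratedFDeriv n :=
    (hf.rapidDecay_iteratedFDeriv (n + 1)).mono fun _ => norm_iteratedFDeriv_fderiv.le

protected theorem add (hf : IsSchwartzFamily f) (hg : IsSchwartzFamily g) :
    IsSchwartzFamily fun i x => f i x + g i x where
  contDiff i := (hf.contDiff i).add (hg.contDiff i)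
  rapidDecay_iteratedFDeriv n := by
    refine ((hf.rapidDecay_iteratedFDeriv n).add (hg.rapidDecay_iteratedFDeriv n)).mono fun p => ?_
    rw [← iteratedFDeriv_add_apply
      ((hf.contDiff p.1).contDiffAt.of_le (mod_cast le_top))
      ((hg.contDiff p.1).contDiffAt.of_le (mod_cast le_top))]
    rfl

theorem clm_comp (hf : IsSchwartzFamily f) (L : V →L[ℝ] W) :
    IsSchwartzFamily fun i x => L (f i x) where
  contDiff i := L.contDiff.comp (hf.contDiff i)
  rapidDecay_iteratedFDeriv n :=
    (hf.rapidDecay_iteratedFDeriv n).of_norm_le (K := ‖L‖) 0 fun p => by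
      rw [pow_zero, mul_one]
      exact L.norm_iteratedFDeriv_comp_left (hf.contDiff p.1).contDiffAt (mod_cast le_top)

theorem smul_of_hasTemperateGrowth (hf : IsSchwartzFamily f) {h : E → ℝ}
    (hh : h.HasTemperateGrowth) : IsSchwartzFamily fun i x => h x • f i x where
  contDiff i := hh.1.smul (hf.contDiff i)
  rapidDecay_iteratedFDeriv n := by
    obtain ⟨m, C, hC₀, hC⟩ := hh.norm_iteratedFDeriv_le_uniform n
    have hsum : RapidDecay fun p : ι × E =>
        ∑ j ∈ Finset.range (n + 1), (n.choose j : ℝ) * ‖iteratedFDeriv ℝ (n - j) (f p.1) p.2‖ :=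
      .sum fun j _ => (hf.rapidDecay_iteratedFDeriv (n - j)).of_norm_le (K := n.choose j) 0
        fun p => by simp
    refine hsum.of_norm_le (K := C) m fun p => ?_
    calc ‖iteratedFDeriv ℝ n (fun x => h x • f p.1 x) p.2‖
        ≤ ∑ j ∈ Finset.range (n + 1), n.choose j * ‖iteratedFDeriv ℝ j h p.2‖ *
            ‖iteratedFDeriv ℝ (n - j) (f p.1) p.2‖ :=
          norm_iteratedFDeriv_smul_le hh.1 (hf.contDiff p.1) p.2 (mod_cast le_top)
      _ ≤ ∑ j ∈ Finset.range (n + 1), n.choose j * (C * (1 + ‖p‖) ^ m) *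
            ‖iteratedFDeriv ℝ (n - j) (f p.1) p.2‖ := by
          gcongr with j hj
          refine (hC j (Finset.mem_range_succ_iff.mp hj) p.2).trans ?_
          gcongr
          exact norm_snd_le p
      _ = C * (1 + ‖p‖) ^ m * ∑ j ∈ Finset.range (n + 1), n.choose j *
            ‖iteratedFDeriv ℝ (n - j) (f p.1) p.2‖ := by
          rw [Finset.mul_sum]
          exact Finset.sum_congr rfl fun j _ => by ring
      _ ≤ _ := by gcongr; exact Real.le_norm_self _

theorem one_add_norm_smul (hf : IsSchwartzFamily f) :
    IsSchwartzFamily fun i x => (1 + ‖i‖) • f i x where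
  contDiff i := (hf.contDiff i).const_smul (1 + ‖i‖)
  rapidDecay_iteratedFDeriv n :=
    (hf.rapidDecay_iteratedFDeriv n).of_norm_le (K := 1) 1 fun p => by
      rw [iteratedFDeriv_const_smul_apply' ((hf.contDiff p.1).contDiffAt.of_le (mod_cast le_top)),
        norm_smul, Real.norm_of_nonneg (by positivity), one_mul, pow_one]
      gcongr
      exact norm_fst_le p

theorem comp_affine (hf : IsSchwartzFamily f) (σ : κ → ι) (L : E' →L[ℝ] E) (c : κ → E) {K : ℝ}
    (hK : ∀ j x, 1 + ‖(j, x)‖ ≤ K * (1 + ‖(σ j, L x + c j)‖)) :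
    IsSchwartzFamily fun j x => f (σ j) (L x + c j) where
  contDiff j := (hf.contDiff (σ j)).comp (L.contDiff.add contDiff_const)
  rapidDecay_iteratedFDeriv n := by
    have hcomp := (hf.rapidDecay_iteratedFDeriv n).comp
      (a := fun q : κ × E' => (σ q.1, L q.2 + c q.1)) fun q => hK q.1 q.2
    refine hcomp.of_norm_le (K := ‖L‖ ^ n) 0 fun q => ?_
    have hshift : ContDiff ℝ ∞ fun x => f (σ q.1) (x + c q.1) :=
      (hf.contDiff (σ q.1)).comp (contDiff_id.add contDiff_const)
    have hchain := L.iteratedFDeriv_comp_right hshift q.2 (i := n) (mod_cast le_top)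
    rw [iteratedFDeriv_comp_add_right] at hchain
    calc ‖iteratedFDeriv ℝ n (fun x => f (σ q.1) (L x + c q.1)) q.2‖
        = ‖(iteratedFDeriv ℝ n (f (σ q.1)) (L q.2 + c q.1)).compContinuousLinearMap
            fun _ => L‖ := congrArg _ hchain
      _ ≤ ‖iteratedFDeriv ℝ n (f (σ q.1)) (L q.2 + c q.1)‖ * ∏ _j : Fin n, ‖L‖ :=
          ContinuousMultilinearMap.norm_compContinuousLinearMap_le _ _
      _ = ‖L‖ ^ n * (1 + ‖q‖) ^ 0 * ‖iteratedFDeriv ℝ n (f (σ q.1)) (L q.2 + c q.1)‖ := by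
          simp [mul_comm]

theorem slice {f : ι → E × E' → V} (hf : IsSchwartzFamily f) :
    IsSchwartzFamily fun (q : ι × E) (y : E') => f q.1 (q.2, y) := by
  have := hf.comp_affine (fun q : ι × E => q.1) (.inr ℝ E E') (fun q => (q.2, 0)) (K := 1)
    fun q y => by simp [Prod.norm_def, max_assoc]
  simpa using this

end Closure

section FourierTransform

variable {κ V : Type*} [SeminormedAddCommGroup κ] [NormedAddCommGroup V] [NormedSpace ℂ V]
  {g : κ → ℝ → V}

protected theorem integrable (hg : IsSchwartzFamily g) (j : κ) : Integrable (g j) := by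
  obtain ⟨C, hC⟩ := hg.rapidDecay.exists_norm_le_inv_one_add_sq
  exact (integrable_inv_one_add_sq.const_mul C).mono'
    (hg.contDiff j).continuous.aestronglyMeasurable (.of_forall (hC j))

theorem exists_norm_fourier_le (hg : IsSchwartzFamily g) :
    ∃ C : ℝ, ∀ j s, ‖𝓕 (g j) s‖ ≤ C := by
  obtain ⟨C, hC⟩ := hg.rapidDecay.exists_norm_le_inv_one_add_sq
  refine ⟨∫ t : ℝ, C * (1 + t ^ 2)⁻¹, fun j s => ?_⟩
  calc ‖𝓕 (g j) s‖ ≤ ∫ t, ‖g j t‖ := VectorFourier.norm_fourierIntegral_le_integral_norm _ _ _ _ _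
    _ ≤ ∫ t : ℝ, C * (1 + t ^ 2)⁻¹ :=
      integral_mono (hg.integrable j).norm (integrable_inv_one_add_sq.const_mul C) (hC j)

protected theorem deriv (hg : IsSchwartzFamily g) : IsSchwartzFamily fun j => deriv (g j) :=
  hg.fderiv.clm_comp (ContinuousLinearMap.apply ℝ V 1)

theorem norm_fourier_one_add_norm_smul (j : κ) (s : ℝ) :
    ‖𝓕 (fun t => (1 + ‖j‖) • g j t) s‖ = (1 + ‖j‖) * ‖𝓕 (g j) s‖ := by
  have : 𝓕 (fun t => (1 + ‖j‖) • g j t) s = (1 + ‖j‖) • 𝓕 (g j) s := by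
    simp only [Real.fourier_eq, smul_comm _ (1 + ‖j‖)]
    exact integral_smul _ _
  rw [this, norm_smul, Real.norm_of_nonneg (by positivity)]

theorem abs_mul_norm_fourier_le (hg : IsSchwartzFamily g) (j : κ) (s : ℝ) :
    |s| * ‖𝓕 (g j) s‖ ≤ ‖𝓕 (deriv (g j)) s‖ := by
  rw [Real.fourier_deriv (hg.integrable j) ((hg.contDiff j).differentiable (by simp))
    (hg.deriv.integrable j), norm_smul]
  gcongr
  have : ‖2 * (Real.pi : ℂ) * Complex.I * s‖ = 2 * Real.pi * |s| := by
    simp [abs_of_pos Real.pi_pos]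
  rw [this]
  nlinarith [Real.pi_gt_three, abs_nonneg s]

theorem rapidDecay_fourier (hg : IsSchwartzFamily g) :
    RapidDecay fun p : κ × ℝ => 𝓕 (g p.1) p.2 := by
  intro N
  induction N generalizing g with
  | zero =>
    obtain ⟨C, hC⟩ := hg.exists_norm_fourier_le
    exact ⟨C, fun p => by simpa using hC p.1 p.2⟩
  | succ N ih =>
    obtain ⟨C, hC⟩ := ih hg.one_add_norm_smul
    obtain ⟨D, hD⟩ := ih hg.deriv
    refine ⟨C + D, fun p => ?_⟩
    have hp : 1 + ‖p‖ ≤ (1 + ‖p.1‖) + |p.2| := by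
      rw [Prod.norm_def, Real.norm_eq_abs, add_assoc]
      gcongr
      exact max_le_add_of_nonneg (norm_nonneg _) (abs_nonneg _)
    calc (1 + ‖p‖) ^ (N + 1) * ‖𝓕 (g p.1) p.2‖
        = (1 + ‖p‖) ^ N * ((1 + ‖p‖) * ‖𝓕 (g p.1) p.2‖) := by ring
      _ ≤ (1 + ‖p‖) ^ N * (((1 + ‖p.1‖) + |p.2|) * ‖𝓕 (g p.1) p.2‖) := by gcongr
      _ = (1 + ‖p‖) ^ N * ((1 + ‖p.1‖) * ‖𝓕 (g p.1) p.2‖) +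
            (1 + ‖p‖) ^ N * (|p.2| * ‖𝓕 (g p.1) p.2‖) := by ring
      _ ≤ (1 + ‖p‖) ^ N * ‖𝓕 (fun t => (1 + ‖p.1‖) • g p.1 t) p.2‖ +
            (1 + ‖p‖) ^ N * ‖𝓕 (deriv (g p.1)) p.2‖ := by
        rw [norm_fourier_one_add_norm_smul]
        gcongr
        exact hg.abs_mul_norm_fourier_le p.1 p.2
      _ ≤ C + D := add_le_add (hC p) (hD p)

end FourierTransform

end IsSchwartzFamily

section PartialFourier

section Definitions

variable {α V : Type*} [NormedAddCommGroup V] [NormedSpace ℂ V]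

/-- The Fourier transform in the second variable. -/
def partialFourier (f : α × ℝ → V) (p : α × ℝ) : V :=
  𝓕 (fun t => f (p.1, t)) p.2

/-- The inverse Fourier transform in the second variable. -/
def partialFourierInv (f : α × ℝ → V) (p : α × ℝ) : V :=
  𝓕⁻ (fun t => f (p.1, t)) p.2

theorem partialFourier_eq_integral (f : α × ℝ → V) (p : α × ℝ) :
    partialFourier f p = ∫ t, 𝐞 (-(t * p.2)) • f (p.1, t) :=
  Real.fourier_real_eq _ _

theorem partialFourierInv_eq_partialFourier_neg (f : α × ℝ → V) (p : α × ℝ) :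
    partialFourierInv f p = partialFourier f (p.1, -p.2) :=
  Real.fourierInv_eq_fourier_neg _ _

end Definitions

-- `E` and `V` share a universe so that inductions can pass from `V` to `E × ℝ →L[ℝ] V`.
variable {ι : Type*} [SeminormedAddCommGroup ι]
  {E V : Type u} [NormedAddCommGroup E] [NormedSpace ℝ E] [NormedAddCommGroup V] [NormedSpace ℂ V]

/-- The function whose partial Fourier transform is the derivative of the partial Fourier transform
of `f`: differentiate in the first variable, and multiply by `-2πit` in the second. -/
def partialFourierDeriv (f : E × ℝ → V) (p : E × ℝ) : E × ℝ →L[ℝ] V :=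
  (fderiv ℝ f p).comp ((ContinuousLinearMap.inl ℝ E ℝ).comp (ContinuousLinearMap.fst ℝ E ℝ)) +
    p.2 • (-(2 * Real.pi * Complex.I) : ℂ) • (ContinuousLinearMap.snd ℝ E ℝ).smulRight (f p)

theorem hasFDerivAt_fourierChar_smul_partialFourierDeriv {f : E × ℝ → V}
    (hf : Differentiable ℝ f) (t : ℝ) (p : E × ℝ) :
    HasFDerivAt (fun q : E × ℝ => 𝐞 (-(t * q.2)) • f (q.1, t))
      (𝐞 (-(t * p.2)) • partialFourierDeriv f (p.1, t)) p := by
  have hchar : HasFDerivAt (fun q : E × ℝ => (𝐞 (-(t * q.2)) : ℂ)) _ p :=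
    Real.hasFDerivAt_fourierChar_neg_bilinear_right
      ((1 : ℝ →L[ℝ] ℝ).smulRight (ContinuousLinearMap.snd ℝ E ℝ)) t p
  have hslice : HasFDerivAt (fun q : E × ℝ => f (q.1, t)) _ p :=
    (hf (p.1, t)).hasFDerivAt.comp p (hasFDerivAt_fst.prodMk (hasFDerivAt_const t p))
  refine (hchar.smul hslice).congr_fderiv ?_
  ext q
  · simp [partialFourierDeriv, Circle.smul_def]
  · suffices (2 * Real.pi * Complex.I * 𝐞 (-(t * p.2)) * t : ℂ) • f (p.1, t) =
        (𝐞 (-(t * p.2)) : ℂ) • (t : ℂ) • (2 * Real.pi * Complex.I : ℂ) • f (p.1, t) by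
      simpa [partialFourierDeriv, Circle.smul_def] using this
    module

namespace IsSchwartzFamily

protected theorem partialFourierDeriv {f : ι → E × ℝ → V} (hf : IsSchwartzFamily f) :
    IsSchwartzFamily fun i => partialFourierDeriv (f i) := by
  let R : (E × ℝ →L[ℝ] V) →L[ℝ] (E × ℝ →L[ℝ] V) :=
    (ContinuousLinearMap.compL ℝ (E × ℝ) (E × ℝ) V).flip
      ((ContinuousLinearMap.inl ℝ E ℝ).comp (ContinuousLinearMap.fst ℝ E ℝ))
  let M : V →L[ℝ] (E × ℝ →L[ℝ] V) := (-(2 * Real.pi * Complex.I) : ℂ) •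
    ContinuousLinearMap.smulRightL ℝ (E × ℝ) V (ContinuousLinearMap.snd ℝ E ℝ)
  exact (hf.fderiv.clm_comp R).add ((hf.clm_comp M).smul_of_hasTemperateGrowth
    (ContinuousLinearMap.snd ℝ E ℝ).hasTemperateGrowth)

theorem integrable_fourierChar_smul {f : ι → E × ℝ → V} (hf : IsSchwartzFamily f) (i : ι)
    (p : E × ℝ) : Integrable fun t => 𝐞 (-(t * p.2)) • f i (p.1, t) :=
  (VectorFourier.fourierIntegral_convergent_iff (L := LinearMap.mul ℝ ℝ)
    Real.continuous_fourierChar (by simpa using continuous_mul) p.2).mpr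
    (hf.slice.integrable (i, p.1))

theorem hasFDerivAt_partialFourier {f : ι → E × ℝ → V} (hf : IsSchwartzFamily f) (i : ι)
    (p : E × ℝ) :
    HasFDerivAt (partialFourier (f i)) (partialFourier (partialFourierDeriv (f i)) p) p := by
  have hdiff : Differentiable ℝ (f i) := (hf.contDiff i).differentiable (by simp)
  obtain ⟨C, hC⟩ := hf.partialFourierDeriv.slice.rapidDecay.exists_norm_le_inv_one_add_sq
  have hbound (t : ℝ) (q : E × ℝ) :
      ‖𝐞 (-(t * q.2)) • partialFourierDeriv (f i) (q.1, t)‖ ≤ C * (1 + t ^ 2)⁻¹ :=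
    (Circle.norm_smul _ _).trans_le (hC (i, q.1) t)
  rw [funext (partialFourier_eq_integral (f i)), partialFourier_eq_integral]
  refine hasFDerivAt_integral_of_dominated_of_fderiv_le
    (F' := fun q t => 𝐞 (-(t * q.2)) • partialFourierDeriv (f i) (q.1, t))
    (bound := fun t => C * (1 + t ^ 2)⁻¹) Filter.univ_mem
    (.of_forall fun q => (hf.integrable_fourierChar_smul i q).aestronglyMeasurable)
    (hf.integrable_fourierChar_smul i p) ?_ ?_ ?_ ?_
  · exact (hf.partialFourierDeriv.integrable_fourierChar_smul i p).aestronglyMeasurable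
  · exact .of_forall fun t q _ => hbound t q
  · exact integrable_inv_one_add_sq.const_mul C
  · exact .of_forall fun t q _ => hasFDerivAt_fourierChar_smul_partialFourierDeriv hdiff t q

theorem rapidDecay_partialFourier {f : ι → E × ℝ → V} (hf : IsSchwartzFamily f) :
    RapidDecay fun p : ι × E × ℝ => partialFourier (f p.1) p.2 :=
  hf.slice.rapidDecay_fourier.comp (a := fun p : ι × E × ℝ => ((p.1, p.2.1), p.2.2)) (K := 1)
    fun p => by simp [Prod.norm_def, max_assoc]

theorem contDiff_partialFourier {f : ι → E × ℝ → V} (hf : IsSchwartzFamily f) (i : ι) (n : ℕ) :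
    ContDiff ℝ n (partialFourier (f i)) := by
  induction n generalizing V with
  | zero =>
    exact contDiff_zero.mpr (continuous_iff_continuousAt.mpr fun p =>
      (hf.hasFDerivAt_partialFourier i p).continuousAt)
  | succ n ih =>
    exact contDiff_succ_iff_hasFDerivAt.mpr ⟨_, ih hf.partialFourierDeriv,
      hf.hasFDerivAt_partialFourier i⟩

theorem rapidDecay_iteratedFDeriv_partialFourier {f : ι → E × ℝ → V} (hf : IsSchwartzFamily f)
    (n : ℕ) :
    RapidDecay fun p : ι × E × ℝ => iteratedFDeriv ℝ n (partialFourier (f p.1)) p.2 := by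
  induction n generalizing V with
  | zero => exact hf.rapidDecay_partialFourier.mono fun _ => norm_iteratedFDeriv_zero.le
  | succ n ih =>
    refine (ih hf.partialFourierDeriv).mono fun p => ?_
    rw [← norm_iteratedFDeriv_fderiv,
      funext fun q => (hf.hasFDerivAt_partialFourier p.1 q).fderiv]

protected theorem partialFourier {f : ι → E × ℝ → V} (hf : IsSchwartzFamily f) :
    IsSchwartzFamily fun i => partialFourier (f i) where
  contDiff i := contDiff_infty.mpr (hf.contDiff_partialFourier i)
  rapidDecay_iteratedFDeriv := hf.rapidDecay_iteratedFDeriv_partialFourier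

protected theorem partialFourierInv {f : ι → E × ℝ → V} (hf : IsSchwartzFamily f) :
    IsSchwartzFamily fun i => partialFourierInv (f i) := by
  have := hf.partialFourier.comp_affine id ((ContinuousLinearMap.fst ℝ E ℝ).prod
    (-ContinuousLinearMap.snd ℝ E ℝ)) 0 (K := 1) fun i p => by simp [Prod.norm_def]
  simpa [← partialFourierInv_eq_partialFourier_neg] using this

variable [CompleteSpace V]

theorem partialFourierInv_partialFourier {f : ι → E × ℝ → V} (hf : IsSchwartzFamily f) (i : ι) :
    partialFourierInv (partialFourier (f i)) = f i := by
  ext ⟨x, t⟩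
  exact congrFun ((hf.slice.contDiff (i, x)).continuous.fourierInv_fourier_eq
    (hf.slice.integrable (i, x)) (hf.partialFourier.slice.integrable (i, x))) t

theorem partialFourier_partialFourierInv {f : ι → E × ℝ → V} (hf : IsSchwartzFamily f) (i : ι) :
    partialFourier (partialFourierInv (f i)) = f i := by
  ext ⟨x, t⟩
  exact congrFun ((hf.slice.contDiff (i, x)).continuous.fourier_fourierInv_eq
    (hf.slice.integrable (i, x)) (hf.partialFourier.slice.integrable (i, x))) t

end IsSchwartzFamily

end PartialFourier

section Continuity

theorem continuous_fourier_of_norm_le {X V : Type*} [TopologicalSpace X]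
    [FirstCountableTopology X] [NormedAddCommGroup V] [NormedSpace ℂ V] {g : X → ℝ → V}
    {bound : ℝ → ℝ} (hg : Continuous g.uncurry) (hbound : Integrable bound)
    (hle : ∀ x t, ‖g x t‖ ≤ bound t) : Continuous fun p : X × ℝ => 𝓕 (g p.1) p.2 := by
  simp only [Real.fourier_real_eq]
  refine continuous_of_dominated (bound := bound) (fun p => ?_) (fun p => ?_) hbound ?_
  · exact (show Continuous fun t => 𝐞 (-(t * p.2)) • g p.1 t by fun_prop).aestronglyMeasurable
  · exact .of_forall fun t => (Circle.norm_smul _ _).trans_le (hle p.1 t)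
  · exact .of_forall fun t => by fun_prop

theorem IsSchwartzFamily.continuous_partialFourier {T ι : Type*} [TopologicalSpace T]
    [FirstCountableTopology T] [SeminormedAddCommGroup ι] {E V : Type*} [NormedAddCommGroup E]
    [NormedSpace ℝ E] [NormedAddCommGroup V] [NormedSpace ℂ V] {f : ι → E × ℝ → V}
    (hf : IsSchwartzFamily f) {σ : T → ι} (hcont : Continuous fun q : T × E × ℝ => f (σ q.1) q.2) :
    Continuous fun q : T × E × ℝ => partialFourier (f (σ q.1)) q.2 := by
  obtain ⟨C, hC⟩ := hf.slice.rapidDecay.exists_norm_le_inv_one_add_sq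
  have hslice : Continuous (fun (x : T × E) t => f (σ x.1) (x.2, t)).uncurry :=
    hcont.comp (by fun_prop : Continuous fun q : (T × E) × ℝ => (q.1.1, q.1.2, q.2))
  exact (continuous_fourier_of_norm_le hslice (integrable_inv_one_add_sq.const_mul C)
    fun x t => hC (σ x.1, x.2) t).comp
      (by fun_prop : Continuous fun q : T × E × ℝ => ((q.1, q.2.1), q.2.2))

end Continuity

section PartialDerivatives

variable {f : ℝ → ℝ → ℂ}

theorem pdr_eq_fderiv (hf : Differentiable ℝ f.uncurry) :
    (pdr f).uncurry = fun p => fderiv ℝ f.uncurry p (1, 0) := by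
  ext ⟨r, s⟩
  exact ((hf (r, s)).hasFDerivAt.comp_hasDerivAt r
    ((hasDerivAt_id r).prodMk (hasDerivAt_const r s))).deriv

theorem pds_eq_fderiv (hf : Differentiable ℝ f.uncurry) :
    (pds f).uncurry = fun p => fderiv ℝ f.uncurry p (0, 1) := by
  ext ⟨r, s⟩
  exact ((hf (r, s)).hasFDerivAt.comp_hasDerivAt s
    ((hasDerivAt_const s r).prodMk (hasDerivAt_id s))).deriv

theorem contDiff_uncurry_pdr (hf : ContDiff ℝ ∞ f.uncurry) : ContDiff ℝ ∞ (pdr f).uncurry := by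
  rw [pdr_eq_fderiv (hf.differentiable (by simp))]
  exact (hf.fderiv_right (by simp)).clm_apply contDiff_const

theorem contDiff_uncurry_pds (hf : ContDiff ℝ ∞ f.uncurry) : ContDiff ℝ ∞ (pds f).uncurry := by
  rw [pds_eq_fderiv (hf.differentiable (by simp))]
  exact (hf.fderiv_right (by simp)).clm_apply contDiff_const

theorem fderiv_uncurry_eq (hf : Differentiable ℝ f.uncurry) (p : ℝ × ℝ) :
    fderiv ℝ f.uncurry p =
      (ContinuousLinearMap.fst ℝ ℝ ℝ).smulRight ((pdr f).uncurry p) +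
        (ContinuousLinearMap.snd ℝ ℝ ℝ).smulRight ((pds f).uncurry p) := by
  rw [pdr_eq_fderiv hf, pds_eq_fderiv hf]
  ext <;> simp

theorem norm_iteratedFDeriv_succ_uncurry_le (hf : ContDiff ℝ ∞ f.uncurry) (n : ℕ) (p : ℝ × ℝ) :
    ‖iteratedFDeriv ℝ (n + 1) f.uncurry p‖ ≤
      ‖iteratedFDeriv ℝ n (pdr f).uncurry p‖ + ‖iteratedFDeriv ℝ n (pds f).uncurry p‖ := by
  let L₁ := ContinuousLinearMap.smulRightL ℝ (ℝ × ℝ) ℂ (ContinuousLinearMap.fst ℝ ℝ ℝ)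
  let L₂ := ContinuousLinearMap.smulRightL ℝ (ℝ × ℝ) ℂ (ContinuousLinearMap.snd ℝ ℝ ℝ)
  have hL₁ : ‖L₁‖ ≤ 1 :=
    (ContinuousLinearMap.norm_smulRightL _).trans_le (ContinuousLinearMap.norm_fst_le ..)
  have hL₂ : ‖L₂‖ ≤ 1 :=
    (ContinuousLinearMap.norm_smulRightL _).trans_le (ContinuousLinearMap.norm_snd_le ..)
  have hr : ContDiffAt ℝ n (pdr f).uncurry p :=
    (contDiff_uncurry_pdr hf).contDiffAt.of_le (mod_cast le_top)
  have hs : ContDiffAt ℝ n (pds f).uncurry p :=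
    (contDiff_uncurry_pds hf).contDiffAt.of_le (mod_cast le_top)
  have hfderiv : fderiv ℝ f.uncurry = L₁ ∘ (pdr f).uncurry + L₂ ∘ (pds f).uncurry :=
    funext (fderiv_uncurry_eq (hf.differentiable (by simp)))
  rw [← norm_iteratedFDeriv_fderiv, hfderiv, iteratedFDeriv_add_apply
    (L₁.contDiff.contDiffAt.comp p hr) (L₂.contDiff.contDiffAt.comp p hs)]
  calc _ ≤ ‖L₁‖ * ‖iteratedFDeriv ℝ n (pdr f).uncurry p‖ +
        ‖L₂‖ * ‖iteratedFDeriv ℝ n (pds f).uncurry p‖ :=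
      norm_add_le_of_le (L₁.norm_iteratedFDeriv_comp_left hr le_rfl)
        (L₂.norm_iteratedFDeriv_comp_left hs le_rfl)
    _ ≤ _ := by gcongr <;> exact mul_le_of_le_one_left (norm_nonneg _) ‹_›

theorem pds_pdr_comm (hf : ContDiff ℝ ∞ f.uncurry) : pds (pdr f) = pdr (pds f) := by
  have hD : Differentiable ℝ (fderiv ℝ f.uncurry) :=
    (hf.fderiv_right (m := ∞) (by simp)).differentiable (by simp)
  have hsymm (p : ℝ × ℝ) : IsSymmSndFDerivAt ℝ f.uncurry p :=
    hf.contDiffAt.isSymmSndFDerivAt (by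
      rw [minSmoothness_of_isRCLikeNormedField]
      exact ENat.LEInfty.out)
  apply Function.uncurry_injective
  rw [pds_eq_fderiv ((contDiff_uncurry_pdr hf).differentiable (by simp)),
    pdr_eq_fderiv ((contDiff_uncurry_pds hf).differentiable (by simp)),
    pdr_eq_fderiv (hf.differentiable (by simp)), pds_eq_fderiv (hf.differentiable (by simp))]
  ext p
  rw [fderiv_clm_apply (hD p) (differentiableAt_const _),
    fderiv_clm_apply (hD p) (differentiableAt_const _)]
  simpa using hsymm p (0, 1) (1, 0)

theorem iterate_pds_pdr (hf : ContDiff ℝ ∞ f.uncurry) (n : ℕ) :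
    pds^[n] (pdr f) = pdr (pds^[n] f) := by
  induction n generalizing f with
  | zero => rfl
  | succ n ih =>
    rw [Function.iterate_succ_apply, Function.iterate_succ_apply, pds_pdr_comm hf,
      ih (contDiff_uncurry_pds hf)]

theorem pdMulti_pdr (hf : ContDiff ℝ ∞ f.uncurry) (α : ℕ × ℕ) :
    pdMulti α (pdr f) = pdMulti (α.1 + 1, α.2) f := by
  rw [pdMulti, pdMulti, iterate_pds_pdr hf, Function.iterate_succ_apply]

theorem pdMulti_pds (α : ℕ × ℕ) : pdMulti α (pds f) = pdMulti (α.1, α.2 + 1) f := by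
  rw [pdMulti, pdMulti, Function.iterate_succ_apply]

end PartialDerivatives

section PartialDerivativeFamilies

variable {ι : Type*} [SeminormedAddCommGroup ι] {f : ι → ℝ → ℝ → ℂ}

theorem rapidDecay_iteratedFDeriv_of_pdMulti (hf : ∀ i, ContDiff ℝ ∞ (f i).uncurry)
    (hdecay : ∀ α, RapidDecay fun p : ι × ℝ × ℝ => pdMulti α (f p.1) p.2.1 p.2.2) (n : ℕ) :
    RapidDecay fun p : ι × ℝ × ℝ => iteratedFDeriv ℝ n (f p.1).uncurry p.2 := by
  induction n generalizing f with
  | zero => exact (hdecay (0, 0)).mono fun _ => norm_iteratedFDeriv_zero.le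
  | succ n ih =>
    have hr := ih (fun i => contDiff_uncurry_pdr (hf i)) fun α => by
      simpa only [pdMulti_pdr (hf _)] using hdecay (α.1 + 1, α.2)
    have hs := ih (fun i => contDiff_uncurry_pds (hf i)) fun α => by
      simpa only [pdMulti_pds] using hdecay (α.1, α.2 + 1)
    exact (hr.norm.add hs.norm).mono fun p =>
      (norm_iteratedFDeriv_succ_uncurry_le (hf p.1) n p.2).trans (Real.le_norm_self _)

namespace IsSchwartzFamily

theorem of_pdMulti (hf : ∀ i, ContDiff ℝ ∞ (f i).uncurry)
    (hdecay : ∀ α, RapidDecay fun p : ι × ℝ × ℝ => pdMulti α (f p.1) p.2.1 p.2.2) :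
    IsSchwartzFamily fun i => (f i).uncurry :=
  ⟨hf, rapidDecay_iteratedFDeriv_of_pdMulti hf hdecay⟩

protected theorem pdr (hf : IsSchwartzFamily fun i => (f i).uncurry) :
    IsSchwartzFamily fun i => (pdr (f i)).uncurry := by
  simpa only [pdr_eq_fderiv ((hf.contDiff _).differentiable (by simp)),
    ContinuousLinearMap.apply_apply] using
    hf.fderiv.clm_comp (ContinuousLinearMap.apply ℝ ℂ ((1, 0) : ℝ × ℝ))

protected theorem pds (hf : IsSchwartzFamily fun i => (f i).uncurry) :
    IsSchwartzFamily fun i => (pds (f i)).uncurry := by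
  simpa only [pds_eq_fderiv ((hf.contDiff _).differentiable (by simp)),
    ContinuousLinearMap.apply_apply] using
    hf.fderiv.clm_comp (ContinuousLinearMap.apply ℝ ℂ ((0, 1) : ℝ × ℝ))

theorem iterate_pdr (hf : IsSchwartzFamily fun i => (f i).uncurry) (n : ℕ) :
    IsSchwartzFamily fun i => (pdr^[n] (f i)).uncurry := by
  induction n with
  | zero => exact hf
  | succ n ih => simpa only [Function.iterate_succ_apply'] using ih.pdr

theorem iterate_pds (hf : IsSchwartzFamily fun i => (f i).uncurry) (n : ℕ) :
    IsSchwartzFamily fun i => (pds^[n] (f i)).uncurry := by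
  induction n with
  | zero => exact hf
  | succ n ih => simpa only [Function.iterate_succ_apply'] using ih.pds

protected theorem pdMulti (hf : IsSchwartzFamily fun i => (f i).uncurry) (α : ℕ × ℕ) :
    IsSchwartzFamily fun i => (pdMulti α (f i)).uncurry :=
  (hf.iterate_pds α.2).iterate_pdr α.1

end IsSchwartzFamily

end PartialDerivativeFamilies

section SchwartzBruhat

theorem norm_le_of_abs_le {M : ℝ} (hM : 1 ≤ M) {k : ℤ} (hk : |(k : ℝ)| ≤ M) (v : Torus) {r s : ℝ}
    (hr : |r| ≤ M) (hs : |s| ≤ M) : ‖((k, v), r, s)‖ ≤ M := by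
  have hv : ‖v‖ ≤ M := by
    have := AddCircle.norm_le_half_period (1 : ℝ) one_ne_zero (x := v)
    rw [abs_one] at this
    linarith
  exact norm_prod_le_iff.mpr ⟨norm_prod_le_iff.mpr ⟨hk, hv⟩, norm_prod_le_iff.mpr ⟨hr, hs⟩⟩

theorem abs_le_norm (k : ℤ) (v : Torus) (r s : ℝ) :
    |(k : ℝ)| ≤ ‖((k, v), r, s)‖ ∧ |r| ≤ ‖((k, v), r, s)‖ ∧ |s| ≤ ‖((k, v), r, s)‖ :=
  have h := norm_prod_le_iff.mp (le_refl ‖((k, v), r, s)‖)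
  ⟨(norm_prod_le_iff.mp h.1).1, norm_prod_le_iff.mp h.2⟩

theorem one_add_norm_pow_le (N : ℕ) (k : ℤ) (v : Torus) (r s : ℝ) :
    (1 + ‖((k, v), r, s)‖) ^ N ≤ 2 ^ N * (|(k : ℝ)| ^ N + |r| ^ N + |s| ^ N + 1) := by
  set M := max (max |(k : ℝ)| |r|) (max |s| 1)
  have hnorm : ‖((k, v), r, s)‖ ≤ M :=
    norm_le_of_abs_le (by simp [M]) (by simp [M]) v (by simp [M]) (by simp [M])
  have hpow : M ^ N ≤ |(k : ℝ)| ^ N + |r| ^ N + |s| ^ N + 1 := by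
    have hk : 0 ≤ |(k : ℝ)| ^ N := by positivity
    have hr : 0 ≤ |r| ^ N := by positivity
    have hs : 0 ≤ |s| ^ N := by positivity
    have hmem : M = |(k : ℝ)| ∨ M = |r| ∨ M = |s| ∨ M = 1 := by grind
    rcases hmem with h | h | h | h <;> rw [h] <;> linarith [one_pow (M := ℝ) N]
  calc (1 + ‖((k, v), r, s)‖) ^ N ≤ (2 * M) ^ N := by
        gcongr
        linarith [show 1 ≤ M by simp [M]]
    _ ≤ _ := by rw [mul_pow]; gcongr

theorem le_one_add_norm_pow (N : ℕ) (k : ℤ) (v : Torus) (r s : ℝ) :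
    |(k : ℝ)| ^ N + |r| ^ N + |s| ^ N + 1 ≤ 4 * (1 + ‖((k, v), r, s)‖) ^ N := by
  obtain ⟨hk, hr, hs⟩ := abs_le_norm k v r s
  set M := ‖((k, v), r, s)‖
  have hpow {x : ℝ} (hx : |x| ≤ M) : |x| ^ N ≤ (1 + M) ^ N := by
    gcongr
    linarith
  have hone : 1 ≤ (1 + M) ^ N := one_le_pow₀ (by linarith [abs_nonneg r])
  linarith [hpow hk, hpow hr, hpow hs]

/-- The maps `(r, s) ↦ F (k, v, r, s)` as a family indexed by `(k, v) : ℤ × 𝕋`. -/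
def fiberFamily (F : ℤ → Torus → ℝ → ℝ → ℂ) (i : ℤ × Torus) : ℝ × ℝ → ℂ :=
  (F i.1 i.2).uncurry

theorem fiberFamily_injective : Function.Injective fiberFamily := fun F G h => by
  ext k v r s
  exact congrFun (congrFun h (k, v)) (r, s)

/-- The Schwartz–Bruhat condition in terms of families indexed by `ℤ × 𝕋`: uniform decay of all
derivatives, and continuity in the torus variable and the real variables jointly. -/
structure IsSchwartzBruhatFamily (f : ℤ × Torus → ℝ × ℝ → ℂ) : Prop where
  isSchwartzFamily : IsSchwartzFamily f
  continuous : ∀ k, Continuous fun q : Torus × ℝ × ℝ => f (k, q.1) q.2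

theorem isSchwartzBruhat_iff {F : ℤ → Torus → ℝ → ℝ → ℂ} :
    IsSchwartzBruhat F ↔ IsSchwartzBruhatFamily (fiberFamily F) := by
  constructor
  · rintro ⟨hcont, hsmooth, hdecay⟩
    refine ⟨.of_pdMulti (fun i => hsmooth i.1 i.2) fun α N => ?_, hcont⟩
    obtain ⟨C, hC⟩ := hdecay N α
    refine ⟨2 ^ N * C, fun ⟨⟨k, v⟩, r, s⟩ => ?_⟩
    calc _ ≤ 2 ^ N * (|(k : ℝ)| ^ N + |r| ^ N + |s| ^ N + 1) * ‖pdMulti α (F k v) r s‖ := by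
          gcongr; exact one_add_norm_pow_le N k v r s
      _ ≤ 2 ^ N * C := by rw [mul_assoc]; gcongr; exact hC k v r s
  · rintro ⟨hF, hcont⟩
    refine ⟨hcont, fun k v => hF.contDiff (k, v), fun N α => ?_⟩
    obtain ⟨C, hC⟩ := (hF.pdMulti (f := fun i : ℤ × Torus => F i.1 i.2) α).rapidDecay N
    refine ⟨4 * C, fun k v r s => ?_⟩
    calc _ ≤ 4 * (1 + ‖((k, v), r, s)‖) ^ N * ‖pdMulti α (F k v) r s‖ := by
          gcongr; exact le_one_add_norm_pow N k v r s
      _ ≤ 4 * C := by rw [mul_assoc]; gcongr; exact hC ((k, v), r, s)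

/-- The substitution in `Ξ`: applied to the partial Fourier transform of `F`, it gives `ΞF`. -/
def twist (θ : ℝ) (b : ℤ) (f : ℤ × Torus → ℝ × ℝ → ℂ) (i : ℤ × Torus) (p : ℝ × ℝ) : ℂ :=
  f (i.1, i.2 - ((i.1 * θ : ℝ) : Torus)) (b * (p.1 + p.2 + i.1), p.2)

/-- The substitution in `Ξ'`: the inverse partial Fourier transform of its result is `Ξ'F`. -/
def untwist (θ : ℝ) (b : ℤ) (f : ℤ × Torus → ℝ × ℝ → ℂ) (i : ℤ × Torus) (p : ℝ × ℝ) : ℂ :=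
  f (i.1, i.2 + ((i.1 * θ : ℝ) : Torus)) (p.1 / b - p.2 - i.1, p.2)

theorem untwist_twist (θ : ℝ) {b : ℤ} (hb : b ≠ 0) (f : ℤ × Torus → ℝ × ℝ → ℂ) :
    untwist θ b (twist θ b f) = f := by
  have hb' : (b : ℝ) ≠ 0 := mod_cast hb
  ext ⟨k, v⟩ ⟨r, s⟩
  have hr : b * (r / b - s - k + s + k) = r := by field_simp; ring
  simp [twist, untwist, hr]

theorem twist_untwist (θ : ℝ) {b : ℤ} (hb : b ≠ 0) (f : ℤ × Torus → ℝ × ℝ → ℂ) :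
    twist θ b (untwist θ b f) = f := by
  have hb' : (b : ℝ) ≠ 0 := mod_cast hb
  ext ⟨k, v⟩ ⟨r, s⟩
  have hr : b * (r + s + k) / b - s - k = r := by field_simp; ring
  simp [twist, untwist, hr]

theorem one_add_norm_le_twist {b : ℤ} (hb : b ≠ 0) (k : ℤ) (v w : Torus) (r s : ℝ) :
    1 + ‖((k, v), r, s)‖ ≤ 4 * (1 + ‖((k, w), (b : ℝ) * (r + s + k), s)‖) := by
  obtain ⟨hk, hbr, hs⟩ := abs_le_norm k w (b * (r + s + k)) s
  set M := ‖((k, w), (b : ℝ) * (r + s + k), s)‖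
  have hb₁ : 1 ≤ |(b : ℝ)| := mod_cast Int.one_le_abs hb
  have hsum : |r + s + k| ≤ M := by
    rw [abs_mul] at hbr
    exact (le_mul_of_one_le_left (abs_nonneg _) hb₁).trans hbr
  have hr : |r| ≤ 3 * M := by
    rw [abs_le] at *
    constructor <;> linarith
  have hM : 0 ≤ M := norm_nonneg _
  have := norm_le_of_abs_le (M := 1 + 3 * M) (by linarith) (k := k) (by linarith) v (r := r)
    (by linarith) (s := s) (by linarith)
  linarith

theorem one_add_norm_le_untwist {b : ℤ} (hb : b ≠ 0) (k : ℤ) (v w : Torus) (r s : ℝ) :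
    1 + ‖((k, v), r, s)‖ ≤ 4 * |(b : ℝ)| * (1 + ‖((k, w), r / b - s - k, s)‖) := by
  obtain ⟨hk, hx, hs⟩ := abs_le_norm k w (r / b - s - k) s
  set M := ‖((k, w), r / b - s - k, s)‖
  have hb₁ : 1 ≤ |(b : ℝ)| := mod_cast Int.one_le_abs hb
  have hdiv : |r / b| ≤ 3 * M := by
    rw [abs_le] at *
    constructor <;> linarith
  have hr : |r| ≤ |(b : ℝ)| * (3 * M) := by
    rwa [abs_div, div_le_iff₀' (by linarith)] at hdiv
  have hM : 0 ≤ M := norm_nonneg _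
  have := norm_le_of_abs_le (M := |(b : ℝ)| * (1 + 3 * M)) (by nlinarith) (k := k) (by nlinarith) v
    (r := r) (by nlinarith) (s := s) (by nlinarith)
  nlinarith

theorem fiberFamily_Xi (θ : ℝ) (b : ℤ) (F : ℤ → Torus → ℝ → ℝ → ℂ) :
    fiberFamily (Xi θ b F) = twist θ b fun i => partialFourier (fiberFamily F i) := by
  ext ⟨k, v⟩ ⟨r, s⟩
  simp only [fiberFamily, Function.uncurry_apply_pair, Xi, twist, partialFourier,
    Real.fourier_real_eq_integral_exp_smul, smul_eq_mul]
  refine integral_congr_ae (.of_forall fun t => ?_)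
  dsimp only
  rw [mul_comm, show -(2 * Real.pi * t * s) = -2 * Real.pi * t * s by ring]

theorem fiberFamily_Xi' (θ : ℝ) (b : ℤ) (F : ℤ → Torus → ℝ → ℝ → ℂ) :
    fiberFamily (Xi' θ b F) = fun i => partialFourierInv (untwist θ b (fiberFamily F) i) := by
  ext ⟨k, v⟩ ⟨r, s⟩
  simp only [fiberFamily, Function.uncurry_apply_pair, Xi', untwist,
    partialFourierInv_eq_partialFourier_neg, partialFourier,
    Real.fourier_real_eq_integral_exp_smul, smul_eq_mul]
  refine integral_congr_ae (.of_forall fun q => ?_)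
  dsimp only
  rw [mul_comm, show 2 * Real.pi * q * s = -2 * Real.pi * q * -s by ring]

namespace IsSchwartzBruhatFamily

variable {f : ℤ × Torus → ℝ × ℝ → ℂ}

protected theorem partialFourier (hf : IsSchwartzBruhatFamily f) :
    IsSchwartzBruhatFamily fun i => partialFourier (f i) where
  isSchwartzFamily := hf.isSchwartzFamily.partialFourier
  continuous k := hf.isSchwartzFamily.continuous_partialFourier (σ := Prod.mk k) (hf.continuous k)

protected theorem partialFourierInv (hf : IsSchwartzBruhatFamily f) :
    IsSchwartzBruhatFamily fun i => partialFourierInv (f i) where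
  isSchwartzFamily := hf.isSchwartzFamily.partialFourierInv
  continuous k := by
    have hneg : Continuous fun q : Torus × ℝ × ℝ => (q.1, q.2.1, -q.2.2) := by fun_prop
    exact ((hf.partialFourier.continuous k).comp hneg).congr fun q =>
      (partialFourierInv_eq_partialFourier_neg _ _).symm

protected theorem twist (hf : IsSchwartzBruhatFamily f) (θ : ℝ) {b : ℤ} (hb : b ≠ 0) :
    IsSchwartzBruhatFamily (twist θ b f) where
  isSchwartzFamily := by
    let L : ℝ × ℝ →L[ℝ] ℝ × ℝ :=
      ((b : ℝ) • (ContinuousLinearMap.fst ℝ ℝ ℝ + ContinuousLinearMap.snd ℝ ℝ ℝ)).prod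
        (ContinuousLinearMap.snd ℝ ℝ ℝ)
    have hL (k : ℤ) (p : ℝ × ℝ) : (b * (p.1 + p.2 + k), p.2) = L p + ((b : ℝ) * k, 0) := by
      simp [L, mul_add]
    have htwist : twist θ b f = fun i p =>
        f (i.1, i.2 - ((i.1 * θ : ℝ) : Torus)) (L p + ((b : ℝ) * i.1, 0)) :=
      funext₂ fun i p => congrArg _ (hL i.1 p)
    rw [htwist]
    refine hf.isSchwartzFamily.comp_affine (K := 4)
      (fun i : ℤ × Torus => (i.1, i.2 - ((i.1 * θ : ℝ) : Torus))) L
      (fun i => ((b : ℝ) * i.1, 0)) fun i p => ?_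
    rw [← hL]
    exact one_add_norm_le_twist hb i.1 i.2 _ p.1 p.2
  continuous k := (hf.continuous k).comp (by fun_prop : Continuous fun q : Torus × ℝ × ℝ =>
    (q.1 - ((k * θ : ℝ) : Torus), b * (q.2.1 + q.2.2 + k), q.2.2))

protected theorem untwist (hf : IsSchwartzBruhatFamily f) (θ : ℝ) {b : ℤ} (hb : b ≠ 0) :
    IsSchwartzBruhatFamily (untwist θ b f) where
  isSchwartzFamily := by
    let L : ℝ × ℝ →L[ℝ] ℝ × ℝ :=
      ((b : ℝ)⁻¹ • ContinuousLinearMap.fst ℝ ℝ ℝ - ContinuousLinearMap.snd ℝ ℝ ℝ).prod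
        (ContinuousLinearMap.snd ℝ ℝ ℝ)
    have hL (k : ℤ) (p : ℝ × ℝ) : (p.1 / b - p.2 - k, p.2) = L p + (-(k : ℝ), 0) := by
      simp [L, div_eq_inv_mul, sub_eq_add_neg]
    have huntwist : untwist θ b f = fun i p =>
        f (i.1, i.2 + ((i.1 * θ : ℝ) : Torus)) (L p + (-(i.1 : ℝ), 0)) :=
      funext₂ fun i p => congrArg _ (hL i.1 p)
    rw [huntwist]
    refine hf.isSchwartzFamily.comp_affine (K := 4 * |(b : ℝ)|)
      (fun i : ℤ × Torus => (i.1, i.2 + ((i.1 * θ : ℝ) : Torus))) L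
      (fun i => (-(i.1 : ℝ), 0)) fun i p => ?_
    rw [← hL]
    exact one_add_norm_le_untwist hb i.1 i.2 _ p.1 p.2
  continuous k := (hf.continuous k).comp (by fun_prop : Continuous fun q : Torus × ℝ × ℝ =>
    (q.1 + ((k * θ : ℝ) : Torus), q.2.1 / b - q.2.2 - k, q.2.2))

end IsSchwartzBruhatFamily

end SchwartzBruhat

/-!
STATEMENT 12: Ξ and Ξ' map the Schwartz–Bruhat space 𝒮₂ into itself and are
mutually inverse bijections of 𝒮₂.
-/

theorem stmt12 (θ : ℝ) (b : ℤ) (hb : b ≠ 0)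
    (F : ℤ → Torus → ℝ → ℝ → ℂ) (hF : IsSchwartzBruhat F) :
    IsSchwartzBruhat (Xi θ b F) ∧ IsSchwartzBruhat (Xi' θ b F) ∧
    Xi' θ b (Xi θ b F) = F ∧ Xi θ b (Xi' θ b F) = F := by
  have hf : IsSchwartzBruhatFamily (fiberFamily F) := isSchwartzBruhat_iff.mp hF
  have hu : IsSchwartzBruhatFamily (untwist θ b (fiberFamily F)) := hf.untwist θ hb
  refine ⟨isSchwartzBruhat_iff.mpr ?_, isSchwartzBruhat_iff.mpr ?_,
    fiberFamily_injective ?_, fiberFamily_injective ?_⟩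
  · rw [fiberFamily_Xi]
    exact hf.partialFourier.twist θ hb
  · rw [fiberFamily_Xi']
    exact hu.partialFourierInv
  · rw [fiberFamily_Xi', fiberFamily_Xi, untwist_twist θ hb]
    exact funext hf.isSchwartzFamily.partialFourierInv_partialFourier
  · rw [fiberFamily_Xi, fiberFamily_Xi',
      funext hu.isSchwartzFamily.partialFourier_partialFourierInv]
    exact twist_untwist θ hb _

end
end

section
/- Fix θ ∈ ℝ and a nonzero integer b, and let Ξ be the map on 𝒮₂ given by (ΞF)(k,[x],r,s) := ∫_ℝ F(k, [x−kθ], b(r+s+k), t)·e^{−2πits} dt. For F₁, F₂ ∈ 𝒮₂, l₁, l₂ ∈ ℤ, and representatives v, w ∈ ℝ of classes [v],[w] ∈ 𝕋, define ⟨F₁,F₂⟩^𝓡(l₁,[v],l₂,[w]) := Σ_{k₁,k₂∈ℤ} ∫_ℝ e^{2πitl₂}·conj(F₁)(k₁, [v−k₁θ], k₂+k₁θ−v+w, t)·F₂(k₁+l₂−l₁, [v−(k₁+l₂)θ], k₂+k₁θ−v+w, t) dt, and ⟨F₁,F₂⟩^𝓟(l₁,[v],l₂,[w]) := Σ_{k₁,k₂∈ℤ}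 ∫_ℝ conj(F₁)(k₁, [v], (k₂+k₁θ−v+w)/b − r, r)·F₂(k₁+l₂−l₁, [v−l₁θ], (k₂+k₁θ−v+w)/b − r + l₁, r−l₂) dr. Then all these sums and integrals converge absolutely, both expressions are independent of the chosen representatives v, w, and for all (l₁,[v],l₂,[w]): ⟨ΞF₁, ΞF₂⟩^𝓟(l₁,[v],l₂,[w]) = ⟨F₁,F₂⟩^𝓡(l₁,[v],l₂,[w]). -/
noncomputable section

open MeasureTheory

/-- Integrand of the (k₁,k₂)-term of the pre-inner product ⟨F₁,F₂⟩^𝓡. -/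
noncomputable def innerRIntegrand (θ : ℝ) (F₁ F₂ : ℤ → Torus → ℝ → ℝ → ℂ)
    (l₁ l₂ k₁ k₂ : ℤ) (v w : ℝ) (t : ℝ) : ℂ :=
  Complex.exp (((2 * Real.pi * t * (l₂ : ℝ) : ℝ) : ℂ) * Complex.I) *
    (starRingEnd ℂ)
      (F₁ k₁ (((v - (k₁ : ℝ) * θ : ℝ)) : Torus)
        ((k₂ : ℝ) + (k₁ : ℝ) * θ - v + w) t) *
    F₂ (k₁ + l₂ - l₁) (((v - ((k₁ : ℝ) + (l₂ : ℝ)) * θ : ℝ)) : Torus)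
      ((k₂ : ℝ) + (k₁ : ℝ) * θ - v + w) t

/-- The pre-inner product ⟨F₁,F₂⟩^𝓡(l₁,[v],l₂,[w]) (computed with
representatives v, w ∈ ℝ). -/
noncomputable def innerR (θ : ℝ) (F₁ F₂ : ℤ → Torus → ℝ → ℝ → ℂ)
    (l₁ l₂ : ℤ) (v w : ℝ) : ℂ :=
  ∑' k : ℤ × ℤ, ∫ t : ℝ, innerRIntegrand θ F₁ F₂ l₁ l₂ k.1 k.2 v w t

/-- Integrand of the (k₁,k₂)-term of the pre-inner product ⟨F₁,F₂⟩^𝓟. -/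
noncomputable def innerPIntegrand (θ : ℝ) (b : ℤ) (F₁ F₂ : ℤ → Torus → ℝ → ℝ → ℂ)
    (l₁ l₂ k₁ k₂ : ℤ) (v w : ℝ) (r : ℝ) : ℂ :=
  (starRingEnd ℂ)
      (F₁ k₁ (((v : ℝ)) : Torus)
        (((k₂ : ℝ) + (k₁ : ℝ) * θ - v + w) / (b : ℝ) - r) r) *
    F₂ (k₁ + l₂ - l₁) (((v - (l₁ : ℝ) * θ : ℝ)) : Torus)
      (((k₂ : ℝ) + (k₁ : ℝ) * θ - v + w) / (b : ℝ) - r + (l₁ : ℝ)) (r - (l₂ : ℝ))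

/-- The pre-inner product ⟨F₁,F₂⟩^𝓟(l₁,[v],l₂,[w]) (computed with
representatives v, w ∈ ℝ). -/
noncomputable def innerP (θ : ℝ) (b : ℤ) (F₁ F₂ : ℤ → Torus → ℝ → ℝ → ℂ)
    (l₁ l₂ : ℤ) (v w : ℝ) : ℂ :=
  ∑' k : ℤ × ℤ, ∫ r : ℝ, innerPIntegrand θ b F₁ F₂ l₁ l₂ k.1 k.2 v w r

/-!
The value `Xi θ b F k v r s` is the Fourier transform at `s` of the function `F k v' r' ·`, where
`v' = v - k * θ` and `r' = b * (r + s + k)`. In the `(k₁, k₂)`-term of `innerP` the integration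
variable cancels from `r'`, which equals `(k₂ + b * k₁) + k₁ * θ - v + w` for both factors. So that
term is the inner product of `𝓕 f` with a translate of `𝓕 g`, where `f` and `g` are the functions
of `t` in the `(k₁, k₂ + b * k₁)`-term of `innerR`. Since the Fourier transform carries modulations
to translations, Plancherel's theorem identifies the two terms, and the shear
`(k₁, k₂) ↦ (k₁, k₂ + b * k₁)` of `ℤ × ℤ` identifies the sums. Absolute convergence comes from the
rapid decay of `F₁` and Peetre's inequality.
-/

section Plancherel

open scoped FourierTransform SchwartzMap InnerProductSpace

variable {V H : Type*} [NormedAddCommGroup V] [NormedAddCommGroup H] [InnerProductSpace ℂ H]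

theorem integrable_inner_schwartzMap [NormedSpace ℝ V] [MeasurableSpace V]
    [OpensMeasurableSpace V] [SecondCountableTopologyEither V H] (f g : 𝓢(V, H)) (μ : Measure V)
    [μ.HasTemperateGrowth] :
    Integrable (fun x => ⟪f x, g x⟫_ℂ) μ := by
  refine (L2.integrable_inner (𝕜 := ℂ) (f.toLp 2 μ) (g.toLp 2 μ)).congr ?_
  filter_upwards [f.coeFn_toLp 2 μ, g.coeFn_toLp 2 μ] with x hf hg
  rw [hf, hg]

variable [InnerProductSpace ℝ V] [FiniteDimensional ℝ V] [MeasurableSpace V] [BorelSpace V]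

theorem fourierInv_comp_sub_right {E : Type*} [NormedAddCommGroup E] [NormedSpace ℂ E]
    (f : V → E) (l t : V) :
    𝓕⁻ (fun r => f (r - l)) t = Real.fourierChar ⟪l, t⟫_ℝ • 𝓕⁻ f t := by
  rw [Real.fourierInv_eq, Real.fourierInv_eq, ← integral_add_right_eq_self _ l, Circle.smul_def,
    ← integral_smul]
  congr 1 with r
  rw [add_sub_cancel_right, inner_add_left, add_comm, AddChar.map_add_eq_mul, mul_smul,
    Circle.smul_def]

/-- The modulation `t ↦ e^{2πi⟨l, t⟩} g t` of a Schwartz function (`modulation_apply`), encoded as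
the Schwartz function whose Fourier transform is the translate of `𝓕 g` by `l`. -/
def modulation (l : V) (g : 𝓢(V, H)) : 𝓢(V, H) :=
  𝓕⁻ ((𝓕 g).compSubConstCLM ℂ l)

variable [CompleteSpace H]

theorem fourier_modulation_apply (l : V) (g : 𝓢(V, H)) (r : V) :
    𝓕 (modulation l g) r = 𝓕 g (r - l) := by
  rw [modulation, FourierTransform.fourier_fourierInv_eq, SchwartzMap.compSubConstCLM_apply]

theorem modulation_apply (l : V) (g : 𝓢(V, H)) (t : V) :
    modulation l g t = Real.fourierChar ⟪l, t⟫_ℝ • g t := by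
  have inversion : 𝓕⁻ (𝓕 (g : V → H)) t = g t := by
    rw [← SchwartzMap.fourier_coe, ← SchwartzMap.fourierInv_coe,
      FourierTransform.fourierInv_fourier_eq]
  rw [← inversion, ← fourierInv_comp_sub_right]
  exact congrFun (SchwartzMap.fourierInv_coe _) t

end Plancherel

section Decay

variable {R : Type*} [CommRing R] [LinearOrder R] [IsStrictOrderedRing R]

theorem one_add_sq_sub_le (x y : R) : 1 + (x - y) ^ 2 ≤ 2 * (1 + x ^ 2) * (1 + y ^ 2) := by
  nlinarith [sq_nonneg (x + y), mul_nonneg (sq_nonneg x) (sq_nonneg y)]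

theorem one_add_sq_mul_add_le (k θ d : R) :
    1 + (k * θ + d) ^ 2 ≤ (1 + θ ^ 2 + d ^ 2) * (1 + k ^ 2) := by
  nlinarith [sq_nonneg (k * d - θ), sq_nonneg k]

theorem four_mul_sq_mul_mul_le (a b c : R) : 4 * (a ^ 2 * b * c) ≤ 2 * a ^ 4 + b ^ 4 + c ^ 4 := by
  nlinarith [sq_nonneg (a ^ 2 - b * c), sq_nonneg (b ^ 2 - c ^ 2)]

theorem one_add_sq_pow_four_le (x : R) : (1 + x ^ 2) ^ 4 ≤ 8 * (1 + x ^ 8) := by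
  convert add_pow_le zero_le_one (sq_nonneg x) 4 using 2
  · norm_num
  · ring

theorem prod_one_add_sq_le (k r t : R) :
    (1 + k ^ 2) ^ 2 * (1 + r ^ 2) * (1 + t ^ 2) ≤ 8 * (k ^ 8 + r ^ 8 + t ^ 8 + 1) := by
  linarith [four_mul_sq_mul_mul_le (1 + k ^ 2) (1 + r ^ 2) (1 + t ^ 2),
    one_add_sq_pow_four_le k, one_add_sq_pow_four_le r, one_add_sq_pow_four_le t,
    (by decide : Even 8).pow_nonneg k, (by decide : Even 8).pow_nonneg r,
    (by decide : Even 8).pow_nonneg t]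

theorem one_add_sq_mul_one_add_sq_le (θ d k m : R) :
    (1 + k ^ 2) * (1 + m ^ 2) ≤
      2 * (1 + θ ^ 2 + d ^ 2) * ((1 + k ^ 2) ^ 2 * (1 + (m + k * θ + d) ^ 2)) := by
  calc (1 + k ^ 2) * (1 + m ^ 2)
      = (1 + k ^ 2) * (1 + ((m + k * θ + d) - (k * θ + d)) ^ 2) := by ring
    _ ≤ (1 + k ^ 2) * (2 * (1 + (m + k * θ + d) ^ 2) * (1 + (k * θ + d) ^ 2)) := by
        gcongr; exact one_add_sq_sub_le _ _
    _ ≤ (1 + k ^ 2) * (2 * (1 + (m + k * θ + d) ^ 2) * ((1 + θ ^ 2 + d ^ 2) * (1 + k ^ 2))) := by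
        gcongr; exact one_add_sq_mul_add_le _ _ _
    _ = _ := by ring

theorem summable_int_inv_one_add_sq : Summable fun k : ℤ => (1 + (k : ℝ) ^ 2)⁻¹ := by
  refine Summable.of_norm_bounded_eventually (Real.summable_one_div_int_pow.mpr one_lt_two) ?_
  filter_upwards [(Set.finite_singleton (0 : ℤ)).eventually_cofinite_notMem] with k (hk : k ≠ 0)
  rw [Real.norm_of_nonneg (by positivity), one_div]
  gcongr
  exact le_add_of_nonneg_left zero_le_one

theorem summable_int_prod_inv_one_add_sq :
    Summable fun k : ℤ × ℤ => (1 + (k.1 : ℝ) ^ 2)⁻¹ * (1 + (k.2 : ℝ) ^ 2)⁻¹ :=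
  summable_int_inv_one_add_sq.mul_of_nonneg summable_int_inv_one_add_sq
    (fun _ => by positivity) (fun _ => by positivity)

end Decay

/-- The shear `(a, x) ↦ (a, x + c a)` of a product, which reindexes the sums over `ℤ × ℤ` defining
`innerR` and `innerP`. -/
def shear {α β : Type*} [AddGroup β] (c : α → β) : α × β ≃ α × β :=
  (Equiv.refl α).prodShear fun a => Equiv.addRight (c a)

section Representatives

variable (θ : ℝ) (b : ℤ) (F₁ F₂ : ℤ → Torus → ℝ → ℝ → ℂ) (l₁ l₂ k₁ k₂ : ℤ) (v w : ℝ) (m n : ℤ)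

theorem Torus.coe_add_intCast (x : ℝ) (m : ℤ) : ((x + m : ℝ) : Torus) = (x : Torus) := by
  simp

theorem Torus.coe_add_intCast_sub (x y : ℝ) (m : ℤ) :
    ((x + m - y : ℝ) : Torus) = ((x - y : ℝ) : Torus) := by
  rw [add_sub_right_comm, Torus.coe_add_intCast]

theorem innerRIntegrand_add_intCast :
    innerRIntegrand θ F₁ F₂ l₁ l₂ k₁ k₂ (v + m) (w + n) =
      innerRIntegrand θ F₁ F₂ l₁ l₂ k₁ (k₂ + (n - m)) v w := by
  have h_point : (k₂ : ℝ) + k₁ * θ - (v + m) + (w + n) =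
      ((k₂ + (n - m) : ℤ) : ℝ) + k₁ * θ - v + w := by push_cast; ring
  ext t
  simp only [innerRIntegrand, Torus.coe_add_intCast_sub, h_point]

theorem innerPIntegrand_add_intCast :
    innerPIntegrand θ b F₁ F₂ l₁ l₂ k₁ k₂ (v + m) (w + n) =
      innerPIntegrand θ b F₁ F₂ l₁ l₂ k₁ (k₂ + (n - m)) v w := by
  have h_point : (k₂ : ℝ) + k₁ * θ - (v + m) + (w + n) =
      ((k₂ + (n - m) : ℤ) : ℝ) + k₁ * θ - v + w := by push_cast; ring
  ext r
  simp only [innerPIntegrand, Torus.coe_add_intCast, Torus.coe_add_intCast_sub, h_point]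

theorem innerR_add_intCast :
    innerR θ F₁ F₂ l₁ l₂ (v + m) (w + n) = innerR θ F₁ F₂ l₁ l₂ v w := by
  simp only [innerR, innerRIntegrand_add_intCast]
  exact (shear fun _ => n - m).tsum_eq fun k : ℤ × ℤ =>
    ∫ t, innerRIntegrand θ F₁ F₂ l₁ l₂ k.1 k.2 v w t

theorem innerP_add_intCast :
    innerP θ b F₁ F₂ l₁ l₂ (v + m) (w + n) = innerP θ b F₁ F₂ l₁ l₂ v w := by
  simp only [innerP, innerPIntegrand_add_intCast]
  exact (shear fun _ => n - m).tsum_eq fun k : ℤ × ℤ =>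
    ∫ r, innerPIntegrand θ b F₁ F₂ l₁ l₂ k.1 k.2 v w r

end Representatives

theorem pdMulti_zero (f : ℝ → ℝ → ℂ) : pdMulti (0, 0) f = f := rfl

theorem pdMulti_zero_left (n : ℕ) (f : ℝ → ℝ → ℂ) (r : ℝ) :
    pdMulti (0, n) f r = iteratedDeriv n (f r) := by
  rw [pdMulti, Function.iterate_zero, id, iteratedDeriv_eq_iterate]
  induction n generalizing f with
  | zero => rfl
  | succ _ ih => exact ih (pds f)

namespace IsSchwartzBruhat

open scoped FourierTransform SchwartzMap

variable {F : ℤ → Torus → ℝ → ℝ → ℂ}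

/-- The restriction `F k v r ·` of a Schwartz–Bruhat function to its last variable, as a Schwartz
function on `ℝ`. -/
def slice (hF : IsSchwartzBruhat F) (k : ℤ) (v : Torus) (r : ℝ) : 𝓢(ℝ, ℂ) where
  toFun := F k v r
  smooth' := (hF.2.1 k v).comp (contDiff_const.prodMk contDiff_id)
  decay' N n := by
    obtain ⟨C, hC⟩ := hF.2.2 N (0, n)
    refine ⟨C, fun s => le_trans ?_ (hC k v r s)⟩
    have weight_le : |s| ^ N ≤ |(k : ℝ)| ^ N + |r| ^ N + |s| ^ N + 1 :=
      le_add_of_le_of_nonneg (le_add_of_nonneg_left (by positivity)) zero_le_one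
    rw [norm_iteratedFDeriv_eq_norm_iteratedDeriv, Real.norm_eq_abs, pdMulti_zero_left]
    exact mul_le_mul_of_nonneg_right weight_le (norm_nonneg _)

theorem Xi_eq_fourier_slice (hF : IsSchwartzBruhat F) (θ : ℝ) (b k : ℤ) (v : Torus) (r s : ℝ) :
    Xi θ b F k v r s = 𝓕 (hF.slice k (v - ((k * θ : ℝ) : Torus)) (b * (r + s + k))) s := by
  rw [SchwartzMap.fourier_coe, Real.fourier_real_eq_integral_exp_smul, Xi]
  congr 1 with t
  rw [smul_eq_mul, mul_comm]
  congr 3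
  push_cast
  ring

theorem exists_norm_le (hF : IsSchwartzBruhat F) :
    ∃ C, ∀ k v r t, ‖F k v r t‖ ≤ C := by
  obtain ⟨C, hC⟩ := hF.2.2 0 (0, 0)
  simp only [pdMulti_zero, pow_zero] at hC
  exact ⟨C, fun k v r t =>
    (le_mul_of_one_le_left (norm_nonneg _) (by norm_num)).trans (hC k v r t)⟩

theorem exists_one_add_sq_mul_norm_le (hF : IsSchwartzBruhat F) :
    ∃ C, ∀ (k : ℤ) v r t,
      (1 + (k : ℝ) ^ 2) ^ 2 * (1 + r ^ 2) * (1 + t ^ 2) * ‖F k v r t‖ ≤ C := by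
  obtain ⟨C, hC⟩ := hF.2.2 8 (0, 0)
  refine ⟨8 * C, fun k v r t => ?_⟩
  have h_decay : ((k : ℝ) ^ 8 + r ^ 8 + t ^ 8 + 1) * ‖F k v r t‖ ≤ C := by
    simpa only [pdMulti_zero, (by decide : Even 8).pow_abs] using hC k v r t
  calc (1 + (k : ℝ) ^ 2) ^ 2 * (1 + r ^ 2) * (1 + t ^ 2) * ‖F k v r t‖
      ≤ 8 * ((k : ℝ) ^ 8 + r ^ 8 + t ^ 8 + 1) * ‖F k v r t‖ := by
        gcongr ?_ * _; exact prod_one_add_sq_le _ _ _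
    _ ≤ 8 * C := by rw [mul_assoc]; gcongr

theorem exists_norm_le_inv_one_add_sq (hF : IsSchwartzBruhat F) (θ d : ℝ) :
    ∃ C, ∀ (k m : ℤ) v t, ‖F k v (m + k * θ + d) t‖ ≤
      C * ((1 + (k : ℝ) ^ 2)⁻¹ * (1 + (m : ℝ) ^ 2)⁻¹) * (1 + t ^ 2)⁻¹ := by
  obtain ⟨C, hC⟩ := hF.exists_one_add_sq_mul_norm_le
  refine ⟨2 * (1 + θ ^ 2 + d ^ 2) * C, fun k m v t => ?_⟩
  rw [mul_assoc, ← mul_inv, ← mul_inv, ← div_eq_mul_inv, le_div_iff₀ (by positivity), mul_comm]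
  set r : ℝ := m + k * θ + d
  calc (1 + (k : ℝ) ^ 2) * (1 + (m : ℝ) ^ 2) * (1 + t ^ 2) * ‖F k v r t‖
      ≤ 2 * (1 + θ ^ 2 + d ^ 2) * ((1 + (k : ℝ) ^ 2) ^ 2 * (1 + r ^ 2)) * (1 + t ^ 2) *
          ‖F k v r t‖ := by
        gcongr ?_ * _ * _; exact one_add_sq_mul_one_add_sq_le θ d k m
    _ = 2 * (1 + θ ^ 2 + d ^ 2) *
          ((1 + (k : ℝ) ^ 2) ^ 2 * (1 + r ^ 2) * (1 + t ^ 2) * ‖F k v r t‖) := by ring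
    _ ≤ 2 * (1 + θ ^ 2 + d ^ 2) * C := by gcongr; exact hC k v r t

end IsSchwartzBruhat

section PreInnerProducts

open scoped FourierTransform SchwartzMap InnerProductSpace

variable {F₁ F₂ : ℤ → Torus → ℝ → ℝ → ℂ} {b : ℤ}

namespace IsSchwartzBruhat

/-- The Schwartz function conjugated in the `(k₁, k₂)`-term of `innerR`. -/
def leftFactor (hF₁ : IsSchwartzBruhat F₁) (θ : ℝ) (k₁ k₂ : ℤ) (v w : ℝ) : 𝓢(ℝ, ℂ) :=
  hF₁.slice k₁ ((v - k₁ * θ : ℝ) : Torus) (k₂ + k₁ * θ - v + w)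

/-- The Schwartz function not conjugated in the `(k₁, k₂)`-term of `innerR`; it absorbs the phase
`e^{2πitl₂}`. -/
def rightFactor (hF₂ : IsSchwartzBruhat F₂) (θ : ℝ) (l₁ l₂ k₁ k₂ : ℤ) (v w : ℝ) :
    𝓢(ℝ, ℂ) :=
  modulation (l₂ : ℝ)
    (hF₂.slice (k₁ + l₂ - l₁) ((v - (k₁ + l₂) * θ : ℝ) : Torus) (k₂ + k₁ * θ - v + w))

end IsSchwartzBruhat

theorem innerRIntegrand_eq_inner (hF₁ : IsSchwartzBruhat F₁)
    (hF₂ : IsSchwartzBruhat F₂) (θ : ℝ) (l₁ l₂ k₁ k₂ : ℤ) (v w : ℝ) :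
    innerRIntegrand θ F₁ F₂ l₁ l₂ k₁ k₂ v w =
      fun t => ⟪hF₁.leftFactor θ k₁ k₂ v w t, hF₂.rightFactor θ l₁ l₂ k₁ k₂ v w t⟫_ℂ := by
  ext t
  rw [innerRIntegrand, IsSchwartzBruhat.rightFactor, modulation_apply, Circle.smul_def,
    Real.fourierChar_apply, RCLike.inner_apply, smul_eq_mul, RCLike.inner_apply,
    conj_trivial (l₂ : ℝ), ← mul_assoc, mul_right_comm]
  rfl

theorem integrable_innerRIntegrand (hF₁ : IsSchwartzBruhat F₁)
    (hF₂ : IsSchwartzBruhat F₂) (θ : ℝ) (l₁ l₂ k₁ k₂ : ℤ) (v w : ℝ) :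
    Integrable (innerRIntegrand θ F₁ F₂ l₁ l₂ k₁ k₂ v w) := by
  rw [innerRIntegrand_eq_inner hF₁ hF₂]
  exact integrable_inner_schwartzMap _ _ _

theorem exists_norm_innerRIntegrand_le (hF₁ : IsSchwartzBruhat F₁)
    (hF₂ : IsSchwartzBruhat F₂) (θ : ℝ) (l₁ l₂ : ℤ) (v w : ℝ) :
    ∃ C, ∀ (k₁ k₂ : ℤ) t, ‖innerRIntegrand θ F₁ F₂ l₁ l₂ k₁ k₂ v w t‖ ≤
      C * ((1 + (k₁ : ℝ) ^ 2)⁻¹ * (1 + (k₂ : ℝ) ^ 2)⁻¹) * (1 + t ^ 2)⁻¹ := by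
  obtain ⟨C₁, hC₁⟩ := hF₁.exists_norm_le_inv_one_add_sq θ (w - v)
  obtain ⟨C₂, hC₂⟩ := hF₂.exists_norm_le
  refine ⟨C₁ * C₂, fun k₁ k₂ t => ?_⟩
  have h_point : (k₂ : ℝ) + k₁ * θ - v + w = k₂ + k₁ * θ + (w - v) := by ring
  rw [innerRIntegrand, norm_mul, norm_mul, Complex.norm_exp_ofReal_mul_I, one_mul,
    RCLike.norm_conj, h_point]
  refine (mul_le_mul (hC₁ k₁ k₂ _ t) (hC₂ _ _ _ t) (norm_nonneg _)
    ((norm_nonneg _).trans (hC₁ k₁ k₂ 0 t))).trans_eq ?_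
  ring

theorem summable_norm_integral_innerRIntegrand (hF₁ : IsSchwartzBruhat F₁)
    (hF₂ : IsSchwartzBruhat F₂) (θ : ℝ) (l₁ l₂ : ℤ) (v w : ℝ) :
    Summable fun k : ℤ × ℤ => ‖∫ t, innerRIntegrand θ F₁ F₂ l₁ l₂ k.1 k.2 v w t‖ := by
  obtain ⟨C, hC⟩ := exists_norm_innerRIntegrand_le hF₁ hF₂ θ l₁ l₂ v w
  refine Summable.of_nonneg_of_le (fun _ => norm_nonneg _) (fun k => ?_)
    ((summable_int_prod_inv_one_add_sq.mul_left C).mul_right (∫ t : ℝ, (1 + t ^ 2)⁻¹))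
  rw [← integral_const_mul]
  exact norm_integral_le_of_norm_le (integrable_inv_one_add_sq.const_mul _)
    (.of_forall (hC k.1 k.2))

theorem innerPIntegrand_Xi_eq_inner (hF₁ : IsSchwartzBruhat F₁)
    (hF₂ : IsSchwartzBruhat F₂) (hb : b ≠ 0) (θ : ℝ) (l₁ l₂ k₁ k₂ : ℤ) (v w : ℝ) :
    innerPIntegrand θ b (Xi θ b F₁) (Xi θ b F₂) l₁ l₂ k₁ k₂ v w =
      fun r => ⟪𝓕 (hF₁.leftFactor θ k₁ (k₂ + b * k₁) v w) r,
        𝓕 (hF₂.rightFactor θ l₁ l₂ k₁ (k₂ + b * k₁) v w) r⟫_ℂ := by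
  have hb' : (b : ℝ) ≠ 0 := Int.cast_ne_zero.mpr hb
  ext r
  set c : ℝ := (k₂ + k₁ * θ - v + w) / b with hc
  have left_point : b * (c - r + r + k₁) = ((k₂ + b * k₁ : ℤ) : ℝ) + k₁ * θ - v + w := by
    rw [hc]; push_cast; field_simp; ring
  have right_point : b * (c - r + l₁ + (r - l₂) + ((k₁ + l₂ - l₁ : ℤ) : ℝ)) =
      ((k₂ + b * k₁ : ℤ) : ℝ) + k₁ * θ - v + w := by
    rw [← left_point]; push_cast; ring
  have right_class : ((v - l₁ * θ : ℝ) : Torus) - ((((k₁ + l₂ - l₁ : ℤ) : ℝ) * θ : ℝ) : Torus) =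
      ((v - (k₁ + l₂) * θ : ℝ) : Torus) := by
    rw [← AddCircle.coe_sub]; congr 1; push_cast; ring
  rw [innerPIntegrand, hF₁.Xi_eq_fourier_slice, hF₂.Xi_eq_fourier_slice, ← hc, left_point,
    right_point, right_class, ← AddCircle.coe_sub, IsSchwartzBruhat.rightFactor,
    fourier_modulation_apply, RCLike.inner_apply, mul_comm, IsSchwartzBruhat.leftFactor]

theorem integrable_innerPIntegrand_Xi (hF₁ : IsSchwartzBruhat F₁)
    (hF₂ : IsSchwartzBruhat F₂) (hb : b ≠ 0) (θ : ℝ) (l₁ l₂ k₁ k₂ : ℤ) (v w : ℝ) :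
    Integrable (innerPIntegrand θ b (Xi θ b F₁) (Xi θ b F₂) l₁ l₂ k₁ k₂ v w) := by
  rw [innerPIntegrand_Xi_eq_inner hF₁ hF₂ hb]
  exact integrable_inner_schwartzMap _ _ _

theorem integral_innerPIntegrand_Xi (hF₁ : IsSchwartzBruhat F₁)
    (hF₂ : IsSchwartzBruhat F₂) (hb : b ≠ 0) (θ : ℝ) (l₁ l₂ k₁ k₂ : ℤ) (v w : ℝ) :
    ∫ r, innerPIntegrand θ b (Xi θ b F₁) (Xi θ b F₂) l₁ l₂ k₁ k₂ v w r =
      ∫ t, innerRIntegrand θ F₁ F₂ l₁ l₂ k₁ (k₂ + b * k₁) v w t := by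
  rw [innerPIntegrand_Xi_eq_inner hF₁ hF₂ hb, innerRIntegrand_eq_inner hF₁ hF₂]
  exact SchwartzMap.integral_inner_fourier_fourier _ _

theorem summable_norm_integral_innerPIntegrand_Xi (hF₁ : IsSchwartzBruhat F₁)
    (hF₂ : IsSchwartzBruhat F₂) (hb : b ≠ 0) (θ : ℝ) (l₁ l₂ : ℤ) (v w : ℝ) :
    Summable fun k : ℤ × ℤ =>
      ‖∫ r, innerPIntegrand θ b (Xi θ b F₁) (Xi θ b F₂) l₁ l₂ k.1 k.2 v w r‖ := by
  simp only [integral_innerPIntegrand_Xi hF₁ hF₂ hb]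
  exact (shear (b * ·)).summable_iff.mpr
    (summable_norm_integral_innerRIntegrand hF₁ hF₂ θ l₁ l₂ v w)

theorem innerP_Xi_eq_innerR (hF₁ : IsSchwartzBruhat F₁)
    (hF₂ : IsSchwartzBruhat F₂) (hb : b ≠ 0) (θ : ℝ) (l₁ l₂ : ℤ) (v w : ℝ) :
    innerP θ b (Xi θ b F₁) (Xi θ b F₂) l₁ l₂ v w = innerR θ F₁ F₂ l₁ l₂ v w := by
  simp only [innerP, innerR, integral_innerPIntegrand_Xi hF₁ hF₂ hb]
  exact (shear (b * ·)).tsum_eq fun k => ∫ t, innerRIntegrand θ F₁ F₂ l₁ l₂ k.1 k.2 v w t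

end PreInnerProducts

/-!
STATEMENT 14: The sums and integrals defining ⟨·,·⟩^𝓡 and ⟨·,·⟩^𝓟 converge
absolutely, are independent of the chosen representatives, and Ξ is
inner-product preserving: ⟨ΞF₁, ΞF₂⟩^𝓟 = ⟨F₁,F₂⟩^𝓡.
-/

theorem stmt14 (θ : ℝ) (b : ℤ) (hb : b ≠ 0)
    (F₁ F₂ : ℤ → Torus → ℝ → ℝ → ℂ)
    (hF₁ : IsSchwartzBruhat F₁) (hF₂ : IsSchwartzBruhat F₂) :
    -- absolute convergence of all the integrals
    (∀ (l₁ l₂ k₁ k₂ : ℤ) (v w : ℝ),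
      Integrable (innerRIntegrand θ F₁ F₂ l₁ l₂ k₁ k₂ v w) (volume : Measure ℝ) ∧
      Integrable (innerPIntegrand θ b (Xi θ b F₁) (Xi θ b F₂) l₁ l₂ k₁ k₂ v w)
        (volume : Measure ℝ)) ∧
    -- absolute convergence of the sums
    (∀ (l₁ l₂ : ℤ) (v w : ℝ),
      Summable (fun k : ℤ × ℤ =>
        ‖∫ t : ℝ, innerRIntegrand θ F₁ F₂ l₁ l₂ k.1 k.2 v w t‖) ∧
      Summable (fun k : ℤ × ℤ =>
        ‖∫ r : ℝ, innerPIntegrand θ b (Xi θ b F₁) (Xi θ b F₂) l₁ l₂ k.1 k.2 v w r‖)) ∧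
    -- independence of the chosen representatives v, w
    (∀ (l₁ l₂ : ℤ) (v v' w w' : ℝ),
      (∃ m : ℤ, v' = v + m) → (∃ m : ℤ, w' = w + m) →
        innerR θ F₁ F₂ l₁ l₂ v w = innerR θ F₁ F₂ l₁ l₂ v' w' ∧
        innerP θ b (Xi θ b F₁) (Xi θ b F₂) l₁ l₂ v w
          = innerP θ b (Xi θ b F₁) (Xi θ b F₂) l₁ l₂ v' w') ∧
    -- Ξ preserves the inner products
    (∀ (l₁ l₂ : ℤ) (v w : ℝ),
      innerP θ b (Xi θ b F₁) (Xi θ b F₂) l₁ l₂ v w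
        = innerR θ F₁ F₂ l₁ l₂ v w) := by
  refine ⟨fun l₁ l₂ k₁ k₂ v w => ⟨?_, ?_⟩, fun l₁ l₂ v w => ⟨?_, ?_⟩, ?_, fun l₁ l₂ v w => ?_⟩
  · exact integrable_innerRIntegrand hF₁ hF₂ θ l₁ l₂ k₁ k₂ v w
  · exact integrable_innerPIntegrand_Xi hF₁ hF₂ hb θ l₁ l₂ k₁ k₂ v w
  · exact summable_norm_integral_innerRIntegrand hF₁ hF₂ θ l₁ l₂ v w
  · exact summable_norm_integral_innerPIntegrand_Xi hF₁ hF₂ hb θ l₁ l₂ v w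
  · rintro l₁ l₂ v _ w _ ⟨m, rfl⟩ ⟨n, rfl⟩
    exact ⟨(innerR_add_intCast ..).symm, (innerP_add_intCast ..).symm⟩
  · exact innerP_Xi_eq_innerR hF₁ hF₂ hb θ l₁ l₂ v w

end
end

section
/- Fix θ ∈ ℝ and a nonzero integer b. For F₁, F₂ ∈ 𝒮₂, l₁, l₂ ∈ ℤ, and representatives v, w ∈ ℝ of [v],[w] ∈ 𝕋, let ⟨F₁,F₂⟩(l₁,[v],l₂,[w]) := Σ_{k₁,k₂∈ℤ} ∫_ℝ conj(F₁)(k₁, [v], (k₂+k₁θ−v+w)/b − r, r)·F₂(k₁+l₂−l₁, [v−l₁θ], (k₂+k₁θ−v+w)/b − r + l₁, r−l₂) dr. Then there exists a function μ : {6,7,8,…} → [0,∞) (depending only on θ and b) such that for all integers M, N ≥ 6 and all F₁, F₂ ∈ 𝒮₂: each value ⟨F₁,F₂⟩(l₁,[v],l₂,[w]) is given by an absolutely convergent sum and integral, and sup_{[v],[w]∈𝕋} Σ_{l₁,l₂∈ℤ} |⟨F₁,F₂⟩(l₁,[v],l₂,[w])| ≤ μ(M)·‖F₁‖_{M,0}·μ(N)·‖F₂‖_{N,0}.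 -/
noncomputable section

open MeasureTheory

/-!
STATEMENT 16: The I-norm estimate: there is μ : {6,7,…} → [0,∞) (depending only
on θ and b) such that for M, N ≥ 6 and F₁, F₂ ∈ 𝒮₂ all sums and integrals
defining ⟨F₁,F₂⟩ converge absolutely and
sup_{[v],[w]} Σ_{l₁,l₂} |⟨F₁,F₂⟩(l₁,[v],l₂,[w])| ≤ μ(M)‖F₁‖_{M,0}·μ(N)‖F₂‖_{N,0}.
-/

/-!
Polynomial decay of order `M > 3` lets `F₁` be dominated by a product of three one-variable weights
`(1 + |·|) ^ (-p)` with `p > 1`, and decay of order `N > 2` lets `F₂` be dominated by such a product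
in its two real variables; `p = 4 / 3` serves for both. The sum of such a weight over a lattice
`x + aℤ` is bounded independently of `x`. By Tonelli's theorem the `l₁`- and `l₂`-sums can
be carried out first and absorb the weights of `F₂`, then the `k₂`-sum, the `k₁`-sum and the
`r`-integral each absorb one weight of `F₁`.
-/

open scoped ENNReal

section IteratedSums

variable {ι κ Ω E : Type*} [MeasurableSpace Ω] {μ : Measure Ω} [NormedAddCommGroup E]
  {f : ι → κ → Ω → E}

lemma integrable_of_tsum_lintegral_enorm_ne_top
    (h : ∑' (i) (j), ∫⁻ x, ‖f i j x‖ₑ ∂μ ≠ ⊤) (i : ι) (j : κ)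
    (hf : AEStronglyMeasurable (f i j) μ) : Integrable (f i j) μ :=
  ⟨hf, (ENNReal.ne_top_of_tsum_ne_top (ENNReal.ne_top_of_tsum_ne_top h i) j).lt_top⟩

variable [NormedSpace ℝ E]

lemma summable_norm_integral_of_tsum_lintegral_enorm_ne_top
    (h : ∑' (i) (j), ∫⁻ x, ‖f i j x‖ₑ ∂μ ≠ ⊤) (i : ι) :
    Summable fun j => ‖∫ x, f i j x ∂μ‖ :=
  tsum_enorm_ne_top_iff_summable_norm.mp <|
    ne_top_of_le_ne_top (ENNReal.ne_top_of_tsum_ne_top h i) <|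
      ENNReal.tsum_le_tsum fun _ => enorm_integral_le_lintegral_enorm _

lemma tsum_enorm_tsum_integral_le_tsum_lintegral_enorm :
    ∑' i, ‖∑' j, ∫ x, f i j x ∂μ‖ₑ ≤ ∑' (i) (j), ∫⁻ x, ‖f i j x‖ₑ ∂μ :=
  ENNReal.tsum_le_tsum fun _ => enorm_tsum_le_tsum_enorm.trans <|
    ENNReal.tsum_le_tsum fun _ => enorm_integral_le_lintegral_enorm _

end IteratedSums

lemma tsum_norm_le_of_tsum_enorm_le {ι E : Type*} [SeminormedAddCommGroup E] {f : ι → E} {C : ℝ}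
    (hC : 0 ≤ C) (h : ∑' i, ‖f i‖ₑ ≤ ENNReal.ofReal C) : ∑' i, ‖f i‖ ≤ C := by
  simpa only [ENNReal.tsum_toReal_eq fun i => enorm_ne_top (x := f i), toReal_enorm,
    ENNReal.toReal_ofReal hC] using ENNReal.toReal_mono ENNReal.ofReal_ne_top h

section DecayWeight

variable {p : ℝ}

/-- The weight `(1 + |x|) ^ (-p)` on the line, against which functions of polynomial decay are
compared. It takes values in `ℝ≥0∞` so that sums and integrals can be interchanged freely. -/
def decayWeight (p x : ℝ) : ℝ≥0∞ := ENNReal.ofReal ((1 + ‖x‖) ^ (-p))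

@[fun_prop]
lemma measurable_decayWeight : Measurable (decayWeight p) := by
  unfold decayWeight
  fun_prop

lemma decayWeight_le_mul_of_le {C x y : ℝ} (hp : 0 ≤ p) (hC : 0 < C)
    (h : 1 + ‖y‖ ≤ C * (1 + ‖x‖)) :
    decayWeight p x ≤ ENNReal.ofReal (C ^ p) * decayWeight p y := by
  rw [decayWeight, decayWeight, ← ENNReal.ofReal_mul (by positivity)]
  refine ENNReal.ofReal_le_ofReal ?_
  rw [Real.rpow_neg (by positivity), Real.rpow_neg (by positivity), ← div_eq_mul_inv,
    inv_le_comm₀ (by positivity) (by positivity), inv_div, div_le_iff₀' (by positivity),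
    ← Real.mul_rpow hC.le (by positivity)]
  exact Real.rpow_le_rpow (by positivity) h hp

lemma lintegral_decayWeight_lt_top (hp : 1 < p) : ∫⁻ x, decayWeight p x < ⊤ :=
  finite_integral_one_add_norm (by simpa only [Module.finrank_self, Nat.cast_one] using hp)

lemma tsum_decayWeight_intCast_lt_top (hp : 1 < p) : ∑' n : ℤ, decayWeight p n < ⊤ := by
  -- The half-integer shift keeps the comparison series away from `|0| ^ (-p)`.
  have hsum := (Real.summable_one_div_int_add_rpow (1 / 2) p).mpr hp
  refine lt_of_le_of_lt (ENNReal.tsum_le_tsum fun n => ?_) hsum.tsum_ofReal_lt_top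
  have hn : (n : ℝ) + 1 / 2 ≠ 0 := fun h => by
    have : 2 * n + 1 = 0 := by exact_mod_cast (by linarith : (2 : ℝ) * n + 1 = 0)
    lia
  have hle : |(n : ℝ) + 1 / 2| ≤ 1 + ‖(n : ℝ)‖ := by
    rw [Real.norm_eq_abs]
    linarith [abs_add_le (n : ℝ) (1 / 2), abs_of_pos (one_half_pos (α := ℝ))]
  rw [one_div, ← Real.rpow_neg (abs_nonneg _)]
  exact ENNReal.ofReal_le_ofReal <|
    Real.rpow_le_rpow_of_nonpos (abs_pos.mpr hn) hle (by linarith)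

/-- The supremum over all base points `x` of the sum of the weight `decayWeight p` over the lattice
`x + aℤ`. -/
def latticeSum (p a : ℝ) : ℝ≥0∞ := ⨆ x : ℝ, ∑' n : ℤ, decayWeight p (x + a * n)

lemma tsum_decayWeight_le_latticeSum {a x : ℝ} {f : ℤ → ℝ} (hf : ∀ n, f n = x + a * n) :
    ∑' n, decayWeight p (f n) ≤ latticeSum p a := by
  simp_rw [hf]
  exact le_iSup (fun x => ∑' n : ℤ, decayWeight p (x + a * n)) x

lemma tsum_decayWeight_add_mul_eq_fract {a : ℝ} (ha : a ≠ 0) (x : ℝ) :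
    ∑' n : ℤ, decayWeight p (x + a * n) =
      ∑' n : ℤ, decayWeight p (a * Int.fract (x / a) + a * n) := by
  rw [← (Equiv.subRight ⌊x / a⌋).tsum_eq fun n : ℤ => decayWeight p (x + a * n)]
  refine tsum_congr fun n => congrArg _ ?_
  simp only [Equiv.subRight_apply, Int.cast_sub, Int.fract]
  field

lemma latticeSum_lt_top {a : ℝ} (hp : 1 < p) (ha : a ≠ 0) : latticeSum p a < ⊤ := by
  suffices h : latticeSum p a ≤
      ENNReal.ofReal ((2 + |a|⁻¹) ^ p) * ∑' n : ℤ, decayWeight p n from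
    h.trans_lt (ENNReal.mul_lt_top ENNReal.ofReal_lt_top (tsum_decayWeight_intCast_lt_top hp))
  refine iSup_le fun x => ?_
  rw [tsum_decayWeight_add_mul_eq_fract ha, ← ENNReal.tsum_mul_left]
  refine ENNReal.tsum_le_tsum fun n =>
    decayWeight_le_mul_of_le (by linarith) (by positivity) ?_
  set t := Int.fract (x / a)
  have ht : |t| ≤ 1 := by
    rw [abs_of_nonneg (Int.fract_nonneg _)]
    exact (Int.fract_lt_one _).le
  have hn : |(n : ℝ)| ≤ 1 + |a|⁻¹ * |a * t + a * n| := by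
    calc |(n : ℝ)| = |-t + (t + n)| := by rw [neg_add_cancel_left]
      _ ≤ |t| + |t + n| := (abs_add_le _ _).trans_eq (by rw [abs_neg])
      _ ≤ 1 + |t + n| := by gcongr
      _ = 1 + |a|⁻¹ * |a * t + a * n| := by
        rw [← mul_add, abs_mul, inv_mul_cancel_left₀ (abs_ne_zero.mpr ha)]
  simp only [Real.norm_eq_abs]
  linear_combination hn + 2 * abs_nonneg (a * t + a * n) + inv_nonneg.mpr (abs_nonneg a)

end DecayWeight

section ProductWeights

variable {ι : Type*} [Fintype ι]

lemma max_one_norm_pow_le_one_add_sum (x : ι → ℝ) (N : ℕ) :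
    max 1 ‖x‖ ^ N ≤ 1 + ∑ i, |x i| ^ N := by
  rcases le_total ‖x‖ 1 with hx | hx
  · rw [max_eq_left hx, one_pow]
    exact le_add_of_nonneg_right (by positivity)
  · rw [max_eq_right hx]
    by_contra! hlt
    have hcoord (i : ι) : ‖x i‖ < ‖x‖ := by
      refine lt_of_pow_lt_pow_left₀ N (norm_nonneg x) (lt_of_le_of_lt ?_ hlt)
      have := Finset.single_le_sum (f := fun i => |x i| ^ N) (fun _ _ => by positivity)
        (Finset.mem_univ i)
      rw [Real.norm_eq_abs]
      linarith
    exact lt_irrefl _ ((pi_norm_lt_iff (by linarith)).mpr hcoord)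

lemma prod_one_add_norm_rpow_le {p : ℝ} {N : ℕ} (hp : 0 ≤ p) (hN : Fintype.card ι * p ≤ N)
    (x : ι → ℝ) :
    ∏ i, (1 + ‖x i‖) ^ p ≤ 2 ^ (Fintype.card ι * p) * (1 + ∑ i, |x i| ^ N) := by
  set t := max 1 ‖x‖
  have ht : 1 ≤ t := le_max_left _ _
  have hcoord (i : ι) : 1 + ‖x i‖ ≤ 2 * t := by
    linarith [(norm_le_pi_norm x i).trans (le_max_right 1 ‖x‖)]
  calc ∏ i, (1 + ‖x i‖) ^ p
      ≤ ∏ _i : ι, (2 * t) ^ p :=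
        Finset.prod_le_prod (fun _ _ => by positivity) fun i _ =>
          Real.rpow_le_rpow (by positivity) (hcoord i) hp
    _ = 2 ^ (Fintype.card ι * p) * t ^ (Fintype.card ι * p) := by
        rw [Finset.prod_const, Finset.card_univ, ← Real.rpow_mul_natCast (by positivity),
          mul_comm p, Real.mul_rpow (by positivity) (by positivity)]
    _ ≤ 2 ^ (Fintype.card ι * p) * t ^ N := by
        rw [← Real.rpow_natCast t N]
        gcongr
    _ ≤ 2 ^ (Fintype.card ι * p) * (1 + ∑ i, |x i| ^ N) := by
        gcongr
        exact max_one_norm_pow_le_one_add_sum x N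

lemma prod_decayWeight (p : ℝ) (x : ι → ℝ) :
    ∏ i, decayWeight p (x i) = ENNReal.ofReal (∏ i, (1 + ‖x i‖) ^ p)⁻¹ := by
  have hinv (i : ι) : ((1 + ‖x i‖) ^ p)⁻¹ = (1 + ‖x i‖) ^ (-p) :=
    (Real.rpow_neg (by positivity) p).symm
  simp_rw [← Finset.prod_inv_distrib, hinv]
  exact (ENNReal.ofReal_prod_of_nonneg fun i _ => by positivity).symm

end ProductWeights

/-- The part of the Schwartz–Bruhat condition on which the estimate rests: `F` is measurable in its
real variables and its seminorm of order `N` without derivatives is finite. -/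
structure HasPolyDecay (F : ℤ → Torus → ℝ → ℝ → ℂ) (N : ℕ) : Prop where
  measurable_uncurry : ∀ (k : ℤ) (v : Torus), Measurable (Function.uncurry (F k v))
  bddAbove : BddAbove (Set.range fun p : ℤ × Torus × ℝ × ℝ =>
    (|(p.1 : ℝ)| ^ N + |p.2.2.1| ^ N + |p.2.2.2| ^ N + 1) * ‖F p.1 p.2.1 p.2.2.1 p.2.2.2‖)

lemma IsSchwartzBruhat.hasPolyDecay {F : ℤ → Torus → ℝ → ℝ → ℂ} (hF : IsSchwartzBruhat F)
    (N : ℕ) : HasPolyDecay F N := by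
  obtain ⟨-, hsmooth, hdecay⟩ := hF
  obtain ⟨C, hC⟩ := hdecay N (0, 0)
  exact ⟨fun k v => (hsmooth k v).continuous.measurable,
    C, Set.forall_mem_range.mpr fun p => hC p.1 p.2.1 p.2.2.1 p.2.2.2⟩

lemma SBseminorm_nonneg (F : ℤ → Torus → ℝ → ℝ → ℂ) (N : ℕ) (α : ℕ × ℕ) :
    0 ≤ SBseminorm F N α :=
  Real.iSup_nonneg fun _ => by positivity

namespace HasPolyDecay

variable {F : ℤ → Torus → ℝ → ℝ → ℂ} {N : ℕ}

lemma mul_norm_le_SBseminorm (hF : HasPolyDecay F N) (k : ℤ) (v : Torus) (r s : ℝ) :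
    (|(k : ℝ)| ^ N + |r| ^ N + |s| ^ N + 1) * ‖F k v r s‖ ≤ SBseminorm F N (0, 0) :=
  le_ciSup hF.bddAbove (k, v, r, s)

lemma enorm_le_prod_decayWeight {ι : Type*} [Fintype ι] {p : ℝ} (hF : HasPolyDecay F N)
    (hp : 0 ≤ p) (hN : Fintype.card ι * p ≤ N) {k : ℤ} {r s : ℝ} (v : Torus) (x : ι → ℝ)
    (hx : ∑ i, |x i| ^ N ≤ |(k : ℝ)| ^ N + |r| ^ N + |s| ^ N) :
    ‖F k v r s‖ₑ ≤ ENNReal.ofReal (2 ^ (Fintype.card ι * p) * SBseminorm F N (0, 0)) *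
      ∏ i, decayWeight p (x i) := by
  have hprod : 0 < ∏ i, (1 + ‖x i‖) ^ p := Finset.prod_pos fun _ _ => by positivity
  have hS := SBseminorm_nonneg F N (0, 0)
  rw [prod_decayWeight, ← ENNReal.ofReal_mul (by positivity), ← ofReal_norm]
  refine ENNReal.ofReal_le_ofReal ?_
  rw [← div_eq_mul_inv, le_div_iff₀' hprod]
  calc (∏ i, (1 + ‖x i‖) ^ p) * ‖F k v r s‖
      ≤ 2 ^ (Fintype.card ι * p) * (|(k : ℝ)| ^ N + |r| ^ N + |s| ^ N + 1) * ‖F k v r s‖ := by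
        gcongr
        refine (prod_one_add_norm_rpow_le hp hN x).trans ?_
        rw [add_comm 1]
        gcongr
    _ ≤ 2 ^ (Fintype.card ι * p) * SBseminorm F N (0, 0) := by
        rw [mul_assoc]
        gcongr
        exact hF.mul_norm_le_SBseminorm k v r s

end HasPolyDecay

section Majorant

variable {p θ : ℝ} {b : ℤ} {v w : ℝ}

/-- The product of decay weights dominating `innerPIntegrand` up to a constant, as a function of
`l = (l₁, l₂)`, `k = (k₁, k₂)` and `r`. The first three factors come from `F₁`, the last two from
`F₂`. -/
def innerPMajorant (p θ : ℝ) (b : ℤ) (v w : ℝ) (l k : ℤ × ℤ) (r : ℝ) : ℝ≥0∞ :=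
  decayWeight p k.1 * decayWeight p (((k.2 : ℝ) + (k.1 : ℝ) * θ - v + w) / (b : ℝ) - r) *
      decayWeight p r *
    (decayWeight p (((k.2 : ℝ) + (k.1 : ℝ) * θ - v + w) / (b : ℝ) - r + (l.1 : ℝ)) *
      decayWeight p (r - (l.2 : ℝ)))

lemma measurable_innerPMajorant (l k : ℤ × ℤ) : Measurable (innerPMajorant p θ b v w l k) := by
  unfold innerPMajorant
  fun_prop

lemma tsum_innerPMajorant_left_le (k : ℤ × ℤ) (r : ℝ) :
    ∑' l, innerPMajorant p θ b v w l k r ≤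
      decayWeight p k.1 * decayWeight p (((k.2 : ℝ) + (k.1 : ℝ) * θ - v + w) / (b : ℝ) - r) *
        decayWeight p r * (latticeSum p 1 * latticeSum p (-1)) := by
  simp only [innerPMajorant, ENNReal.tsum_mul_left, ENNReal.tsum_prod', ENNReal.tsum_mul_right]
  gcongr
  · exact tsum_decayWeight_le_latticeSum fun n => by rw [one_mul]
  · exact tsum_decayWeight_le_latticeSum fun n => by rw [neg_one_mul, sub_eq_add_neg]

lemma tsum_decayWeight_mul_decayWeight_div_le (r : ℝ) :
    ∑' k : ℤ × ℤ, decayWeight p k.1 *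
        decayWeight p (((k.2 : ℝ) + (k.1 : ℝ) * θ - v + w) / (b : ℝ) - r) ≤
      latticeSum p 1 * latticeSum p (b : ℝ)⁻¹ := by
  simp only [ENNReal.tsum_prod', ENNReal.tsum_mul_left]
  calc ∑' k₁ : ℤ, decayWeight p k₁ *
        ∑' k₂ : ℤ, decayWeight p (((k₂ : ℝ) + (k₁ : ℝ) * θ - v + w) / (b : ℝ) - r)
      ≤ ∑' k₁ : ℤ, decayWeight p k₁ * latticeSum p (b : ℝ)⁻¹ := by
        gcongr with k₁
        exact tsum_decayWeight_le_latticeSum (x := ((k₁ : ℝ) * θ - v + w) / b - r)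
          fun n => by ring
    _ ≤ latticeSum p 1 * latticeSum p (b : ℝ)⁻¹ := by
        rw [ENNReal.tsum_mul_right]
        gcongr
        exact tsum_decayWeight_le_latticeSum fun n => by rw [one_mul, zero_add]

lemma tsum_tsum_innerPMajorant_le (r : ℝ) :
    ∑' (l) (k), innerPMajorant p θ b v w l k r ≤
      latticeSum p 1 * latticeSum p (b : ℝ)⁻¹ * (latticeSum p 1 * latticeSum p (-1)) *
        decayWeight p r := by
  rw [ENNReal.tsum_comm]
  refine (ENNReal.tsum_le_tsum fun k => tsum_innerPMajorant_left_le k r).trans ?_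
  rw [ENNReal.tsum_mul_right, ENNReal.tsum_mul_right, mul_right_comm]
  gcongr
  exact tsum_decayWeight_mul_decayWeight_div_le r

/-- The total mass of `innerPMajorant`, summed over `l` and `k` and integrated over `r`, is at most
this constant. It does not involve `θ`, `v` and `w`, by translation invariance. -/
def majorantMass (p : ℝ) (b : ℤ) : ℝ≥0∞ :=
  latticeSum p 1 * latticeSum p (b : ℝ)⁻¹ * (latticeSum p 1 * latticeSum p (-1)) *
    ∫⁻ r, decayWeight p r

lemma majorantMass_ne_top (hp : 1 < p) (hb : b ≠ 0) : majorantMass p b ≠ ⊤ := by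
  have h_one := latticeSum_lt_top hp one_ne_zero
  have h_neg_one := latticeSum_lt_top hp (neg_ne_zero.mpr one_ne_zero)
  have h_inv := latticeSum_lt_top hp (inv_ne_zero (Int.cast_ne_zero.mpr hb))
  have h_int := lintegral_decayWeight_lt_top hp
  unfold majorantMass
  finiteness

lemma tsum_lintegral_innerPMajorant_le :
    ∑' (l) (k), ∫⁻ r, innerPMajorant p θ b v w l k r ≤ majorantMass p b := by
  have hmeas := measurable_innerPMajorant (p := p) (θ := θ) (b := b) (v := v) (w := w)
  calc ∑' (l) (k), ∫⁻ r, innerPMajorant p θ b v w l k r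
      = ∫⁻ r, ∑' (l) (k), innerPMajorant p θ b v w l k r := by
        simp_rw [← lintegral_tsum fun k => (hmeas _ k).aemeasurable]
        exact (lintegral_tsum fun l => (Measurable.tsum (hmeas l)).aemeasurable).symm
    _ ≤ ∫⁻ r, latticeSum p 1 * latticeSum p (b : ℝ)⁻¹ * (latticeSum p 1 * latticeSum p (-1)) *
          decayWeight p r := lintegral_mono tsum_tsum_innerPMajorant_le
    _ = majorantMass p b := lintegral_const_mul _ measurable_decayWeight

end Majorant

section InnerProduct

variable {θ : ℝ} {b : ℤ} {F₁ F₂ : ℤ → Torus → ℝ → ℝ → ℂ} {M N : ℕ}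

lemma measurable_innerPIntegrand (h₁ : HasPolyDecay F₁ M) (h₂ : HasPolyDecay F₂ N)
    (l₁ l₂ k₁ k₂ : ℤ) (v w : ℝ) : Measurable (innerPIntegrand θ b F₁ F₂ l₁ l₂ k₁ k₂ v w) := by
  have hF₁ := h₁.measurable_uncurry k₁ v
  have hF₂ := h₂.measurable_uncurry (k₁ + l₂ - l₁) ((v - (l₁ : ℝ) * θ : ℝ) : Torus)
  exact (Complex.continuous_conj.measurable.comp
      (hF₁.comp (f := fun r : ℝ => (_ - r, r)) (by fun_prop))).mul
    (hF₂.comp (f := fun r : ℝ => (_ - r + (l₁ : ℝ), r - (l₂ : ℝ))) (by fun_prop))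

lemma enorm_innerPIntegrand_le {p : ℝ} (h₁ : HasPolyDecay F₁ M) (h₂ : HasPolyDecay F₂ N)
    (hp : 0 ≤ p) (hM : 3 * p ≤ M) (hN : 2 * p ≤ N) (l k : ℤ × ℤ) (v w r : ℝ) :
    ‖innerPIntegrand θ b F₁ F₂ l.1 l.2 k.1 k.2 v w r‖ₑ ≤
      ENNReal.ofReal (2 ^ (3 * p) * SBseminorm F₁ M (0, 0)) *
        ENNReal.ofReal (2 ^ (2 * p) * SBseminorm F₂ N (0, 0)) *
        innerPMajorant p θ b v w l k r := by
  set y := ((k.2 : ℝ) + (k.1 : ℝ) * θ - v + w) / (b : ℝ) - r with hy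
  have hF₁ := h₁.enorm_le_prod_decayWeight (ι := Fin 3) (k := k.1) (r := y) (s := r) hp
    (by simpa only [Fintype.card_fin, Nat.cast_ofNat] using hM) (v : Torus) ![(k.1 : ℝ), y, r]
    (by simp [Fin.sum_univ_three])
  have hF₂ := h₂.enorm_le_prod_decayWeight (ι := Fin 2) (k := k.1 + l.2 - l.1) (r := y + l.1)
    (s := r - l.2) hp (by simpa only [Fintype.card_fin, Nat.cast_ofNat] using hN)
    ((v - (l.1 : ℝ) * θ : ℝ) : Torus) ![y + (l.1 : ℝ), r - (l.2 : ℝ)]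
    (by simp [Fin.sum_univ_two, add_assoc])
  simp only [Fintype.card_fin, Nat.cast_ofNat, Fin.prod_univ_three, Fin.prod_univ_two,
    Matrix.cons_val] at hF₁ hF₂
  rw [innerPIntegrand, innerPMajorant, ← hy, enorm_mul, RCLike.enorm_conj, mul_mul_mul_comm]
  exact mul_le_mul' hF₁ hF₂

lemma tsum_lintegral_enorm_innerPIntegrand_le {p : ℝ} (h₁ : HasPolyDecay F₁ M)
    (h₂ : HasPolyDecay F₂ N) (hp : 0 ≤ p) (hM : 3 * p ≤ M) (hN : 2 * p ≤ N) (v w : ℝ) :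
    ∑' (l : ℤ × ℤ) (k : ℤ × ℤ), ∫⁻ r, ‖innerPIntegrand θ b F₁ F₂ l.1 l.2 k.1 k.2 v w r‖ₑ ≤
      ENNReal.ofReal (2 ^ (3 * p) * SBseminorm F₁ M (0, 0)) *
        ENNReal.ofReal (2 ^ (2 * p) * SBseminorm F₂ N (0, 0)) * majorantMass p b := by
  refine (ENNReal.tsum_le_tsum fun l => ENNReal.tsum_le_tsum fun k => lintegral_mono fun r =>
    enorm_innerPIntegrand_le h₁ h₂ hp hM hN l k v w r).trans ?_
  simp_rw [lintegral_const_mul _ (measurable_innerPMajorant _ _), ENNReal.tsum_mul_left]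
  gcongr
  exact tsum_lintegral_innerPMajorant_le

lemma exists_tsum_lintegral_enorm_innerPIntegrand_le {p : ℝ} (hp : 1 < p) (hb : b ≠ 0) :
    ∃ μ : ℝ, 0 ≤ μ ∧ ∀ (θ : ℝ) (M N : ℕ), 3 * p ≤ M → 2 * p ≤ N →
      ∀ F₁ F₂ : ℤ → Torus → ℝ → ℝ → ℂ, HasPolyDecay F₁ M → HasPolyDecay F₂ N → ∀ v w : ℝ,
        ∑' (l : ℤ × ℤ) (k : ℤ × ℤ), ∫⁻ r, ‖innerPIntegrand θ b F₁ F₂ l.1 l.2 k.1 k.2 v w r‖ₑ ≤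
          ENNReal.ofReal (μ * SBseminorm F₁ M (0, 0) * (μ * SBseminorm F₂ N (0, 0))) := by
  set K : ℝ := 2 ^ (3 * p) * 2 ^ (2 * p) * (majorantMass p b).toReal
  refine ⟨√K, Real.sqrt_nonneg K, fun θ M N hM hN F₁ F₂ h₁ h₂ v w => ?_⟩
  have hS₁ := SBseminorm_nonneg F₁ M (0, 0)
  have hS₂ := SBseminorm_nonneg F₂ N (0, 0)
  have hK : √K * √K = K := Real.mul_self_sqrt (by positivity)
  refine (tsum_lintegral_enorm_innerPIntegrand_le h₁ h₂ (by linarith) hM hN v w).trans_eq ?_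
  rw [← ENNReal.ofReal_toReal (majorantMass_ne_top hp hb),
    ← ENNReal.ofReal_mul (by positivity), ← ENNReal.ofReal_mul (by positivity),
    mul_mul_mul_comm √K, hK]
  exact congrArg _ (by ring)

end InnerProduct

theorem stmt16_general (b : ℤ) (hb : b ≠ 0) :
    ∃ μ : ℝ, 0 ≤ μ ∧
      ∀ (θ : ℝ) (M N : ℕ), 4 ≤ M → 3 ≤ N →
        ∀ (F₁ F₂ : ℤ → Torus → ℝ → ℝ → ℂ),
          HasPolyDecay F₁ M → HasPolyDecay F₂ N →
          (∀ (l₁ l₂ k₁ k₂ : ℤ) (v w : ℝ),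
            Integrable (innerPIntegrand θ b F₁ F₂ l₁ l₂ k₁ k₂ v w)
              (volume : Measure ℝ)) ∧
          (∀ (l₁ l₂ : ℤ) (v w : ℝ),
            Summable (fun k : ℤ × ℤ =>
              ‖∫ r : ℝ, innerPIntegrand θ b F₁ F₂ l₁ l₂ k.1 k.2 v w r‖)) ∧
          (∀ v w : ℝ,
            Summable (fun l : ℤ × ℤ => ‖innerP θ b F₁ F₂ l.1 l.2 v w‖)) ∧
          (⨆ p : ℝ × ℝ, ∑' l : ℤ × ℤ, ‖innerP θ b F₁ F₂ l.1 l.2 p.1 p.2‖)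
            ≤ μ * SBseminorm F₁ M (0, 0) * (μ * SBseminorm F₂ N (0, 0)) := by
  obtain ⟨μ, hμ, hbound⟩ :=
    exists_tsum_lintegral_enorm_innerPIntegrand_le (p := 4 / 3) (by norm_num) hb
  refine ⟨μ, hμ, fun θ M N hM hN F₁ F₂ h₁ h₂ => ?_⟩
  have hM' : (4 : ℝ) ≤ M := by exact_mod_cast hM
  have hN' : (3 : ℝ) ≤ N := by exact_mod_cast hN
  let f : ℝ → ℝ → ℤ × ℤ → ℤ × ℤ → ℝ → ℂ :=
    fun v w l k => innerPIntegrand θ b F₁ F₂ l.1 l.2 k.1 k.2 v w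
  have hle (v w : ℝ) := hbound θ M N (by linarith) (by linarith) F₁ F₂ h₁ h₂ v w
  have hfin (v w : ℝ) : ∑' (l) (k), ∫⁻ r, ‖f v w l k r‖ₑ ≠ ⊤ :=
    ne_top_of_le_ne_top ENNReal.ofReal_ne_top (hle v w)
  have hinnerP (v w : ℝ) : ∑' l : ℤ × ℤ, ‖innerP θ b F₁ F₂ l.1 l.2 v w‖ₑ ≤
      ∑' (l) (k), ∫⁻ r, ‖f v w l k r‖ₑ :=
    tsum_enorm_tsum_integral_le_tsum_lintegral_enorm
  refine ⟨fun l₁ l₂ k₁ k₂ v w => ?_, fun l₁ l₂ v w => ?_, fun v w => ?_, ?_⟩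
  · exact integrable_of_tsum_lintegral_enorm_ne_top (hfin v w) (l₁, l₂) (k₁, k₂)
      (measurable_innerPIntegrand h₁ h₂ l₁ l₂ k₁ k₂ v w).aestronglyMeasurable
  · exact summable_norm_integral_of_tsum_lintegral_enorm_ne_top (hfin v w) (l₁, l₂)
  · exact tsum_enorm_ne_top_iff_summable_norm.mp (ne_top_of_le_ne_top (hfin v w) (hinnerP v w))
  · have hC := mul_nonneg (mul_nonneg hμ (SBseminorm_nonneg F₁ M (0, 0)))
      (mul_nonneg hμ (SBseminorm_nonneg F₂ N (0, 0)))
    exact ciSup_le fun q =>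
      tsum_norm_le_of_tsum_enorm_le hC ((hinnerP q.1 q.2).trans (hle q.1 q.2))

theorem stmt16 (θ : ℝ) (b : ℤ) (hb : b ≠ 0) :
    ∃ μ : ℕ → ℝ, (∀ n, 0 ≤ μ n) ∧
      ∀ (M N : ℕ), 6 ≤ M → 6 ≤ N →
        ∀ (F₁ F₂ : ℤ → Torus → ℝ → ℝ → ℂ),
          IsSchwartzBruhat F₁ → IsSchwartzBruhat F₂ →
          -- absolute convergence of the integrals
          (∀ (l₁ l₂ k₁ k₂ : ℤ) (v w : ℝ),
            Integrable (innerPIntegrand θ b F₁ F₂ l₁ l₂ k₁ k₂ v w)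
              (volume : Measure ℝ)) ∧
          -- absolute convergence of the (k₁,k₂)-sums
          (∀ (l₁ l₂ : ℤ) (v w : ℝ),
            Summable (fun k : ℤ × ℤ =>
              ‖∫ r : ℝ, innerPIntegrand θ b F₁ F₂ l₁ l₂ k.1 k.2 v w r‖)) ∧
          -- absolute convergence of the (l₁,l₂)-sums
          (∀ v w : ℝ,
            Summable (fun l : ℤ × ℤ => ‖innerP θ b F₁ F₂ l.1 l.2 v w‖)) ∧
          -- the I-norm estimate
          (⨆ p : ℝ × ℝ, ∑' l : ℤ × ℤ, ‖innerP θ b F₁ F₂ l.1 l.2 p.1 p.2‖)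
            ≤ μ M * SBseminorm F₁ M (0, 0) * (μ N * SBseminorm F₂ N (0, 0)) := by
  obtain ⟨μ, hμ, h⟩ := stmt16_general b hb
  exact ⟨fun _ => μ, fun _ => hμ, fun M N hM hN F₁ F₂ h₁ h₂ => h θ M N (by lia) (by lia) F₁ F₂
    (h₁.hasPolyDecay M) (h₂.hasPolyDecay N)⟩

end
end
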